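/- With the notation below, assuming every Dirichlet L-function modulo q satisfies the Riemann Hypothesis, there is a constant C depending only on k, A and the a_j such that ∑_{χ ∈ 𝒯} exp(2·[Re ∑_{p ≤ q^{β_𝓘}} (χ(p)h(p)/p^{1/2 + 1/(β_𝓘 log q)})·(log(q^{β_𝓘}/p)/log(q^{β_𝓘})) + (1/2)·Re ∑_{p ≤ q^{β_𝓘/2}} χ(p²)h(p²)/p]) ≤ C · φ(q) · (log q)^{(a_1²+⋯+a_{2k}²)/4} · ∏_{1≤i<j≤2k} g(|t_i − t_j|)^{a_i a_j/2}. -/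

import Mathlib

open Complex Real Finset

def dirichletRH {q : ℕ} [NeZero q] (χ : DirichletCharacter ℂ q) : Prop :=
  ∀ s : ℂ, 0 < s.re → s.re < 1 → DirichletCharacter.LFunction χ s = 0 → s.re = 1 / 2

noncomputable def gfun (q : ℕ) (x : ℝ) : ℝ :=
  if x ≤ 1 / Real.log q ∨ Real.exp q ≤ x then Real.log q
  else if x ≤ 10 then 1 / x
  else Real.log (Real.log x)

/-- `β_0 = 0` and `β_i = 20^{i-1}/(log log q)²` for `i ≥ 1`. -/
noncomputable def betaSeq (q : ℕ) (i : ℕ) : ℝ :=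
  if i = 0 then 0 else 20 ^ (i - 1) / (Real.log (Real.log q)) ^ 2

/-- `𝓘 = 1 + max {i : β_i ≤ e^{-10000 a² (A+1)}}`. -/
noncomputable def bigI (q : ℕ) (a A : ℝ) : ℕ :=
  1 + sSup {i : ℕ | betaSeq q i ≤ Real.exp (-(10000 * a ^ 2 * (A + 1)))}

/-- `G_{(i,l)}(χ) = ∑_{q^{β_{i-1}} < p ≤ q^{β_i}} χ(p)h(p)/p^{1/2+1/(β_l log q)}
    · log(q^{β_l}/p)/log(q^{β_l})`, the sum running over primes. -/
noncomputable def Gfun (q : ℕ) (h : ℕ → ℂ) (i l : ℕ) (χ : DirichletCharacter ℂ q) : ℂ :=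
  ∑ p ∈ Finset.filter (fun p : ℕ => p.Prime ∧ (q : ℝ) ^ betaSeq q (i - 1) < (p : ℝ))
      (Finset.Iic ⌊(q : ℝ) ^ betaSeq q i⌋₊),
    χ p * h p / (p : ℂ) ^ (((1 / 2 + 1 / (betaSeq q l * Real.log q) : ℝ) : ℂ)) *
      ((Real.log ((q : ℝ) ^ betaSeq q l / p) / Real.log ((q : ℝ) ^ betaSeq q l) : ℝ) : ℂ)

noncomputable def zterm (n : ℕ) (s : ℂ) : ℂ :=
  (s - 1) * ((n + 1 : ℕ) : ℂ) ^ (-s) + ((n + 2 : ℕ) : ℂ) ^ (1 - s) - ((n + 1 : ℕ) : ℂ) ^ (1 - s)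

lemma cpow_real_hasDerivAt (r : ℂ) {x : ℝ} (hx : 0 < x) :
    HasDerivAt (fun y : ℝ => (y : ℂ) ^ r) (r * (x : ℂ) ^ (r - 1)) x := by
  have h1 : HasDerivAt (fun z : ℂ => z ^ r) (r * (x : ℂ) ^ (r - 1)) (x : ℂ) := by
    have := (hasDerivAt_id (x : ℂ)).cpow_const (c := r) (Or.inl (by simpa using hx))
    simpa using this
  exact h1.comp_ofReal

lemma cpow_diff_bound (s : ℂ) (hs : 0 ≤ s.re) (n : ℕ) {x : ℝ} (hx : x ∈ Set.Icc ((n : ℝ) + 1) (n + 2)) :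
    ‖(x : ℂ) ^ (-s) - (((n : ℝ) + 1 : ℝ) : ℂ) ^ (-s)‖ ≤ ‖s‖ * ((n : ℝ) + 1) ^ (-s.re - 1) := by
  have hn : (0 : ℝ) < (n : ℝ) + 1 := by positivity
  have key := Convex.norm_image_sub_le_of_norm_hasDerivWithin_le
    (f := fun y : ℝ => (y : ℂ) ^ (-s)) (f' := fun y : ℝ => (-s) * (y : ℂ) ^ (-s - 1))
    (s := Set.Icc ((n : ℝ) + 1) (n + 2)) (C := ‖s‖ * ((n : ℝ) + 1) ^ (-s.re - 1))
    (x := (n : ℝ) + 1) (y := x) ?_ ?_ (convex_Icc _ _) ⟨le_rfl, by linarith⟩ hx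
  · refine key.trans ?_
    have h1 : ‖x - ((n : ℝ) + 1)‖ ≤ 1 := by
      rw [Real.norm_eq_abs, abs_le]; constructor <;> linarith [hx.1, hx.2]
    have h2 : 0 ≤ ‖s‖ * ((n : ℝ) + 1) ^ (-s.re - 1) := by positivity
    nlinarith
  · intro y hy
    exact (cpow_real_hasDerivAt (-s) (lt_of_lt_of_le hn hy.1)).hasDerivWithinAt
  · intro y hy
    have hy0 : 0 < y := lt_of_lt_of_le hn hy.1
    rw [norm_mul, norm_neg, Complex.norm_cpow_eq_rpow_re_of_pos hy0]
    have : (-s - 1).re = -s.re - 1 := by simp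
    rw [this]
    gcongr ?_ * ?_
    exact Real.rpow_le_rpow_of_nonpos hn hy.1 (by linarith)

lemma zterm_bound (s : ℂ) (hs : 0 ≤ s.re) (n : ℕ) :
    ‖zterm n s‖ ≤ ‖s‖ * ‖s - 1‖ * ((n : ℝ) + 1) ^ (-s.re - 1) := by
  have hn : (0 : ℝ) < (n : ℝ) + 1 := by positivity
  have key := Convex.norm_image_sub_le_of_norm_hasDerivWithin_le
    (f := fun y : ℝ => (y : ℂ) ^ (1 - s) - (1 - s) * (((n : ℝ) + 1 : ℝ) : ℂ) ^ (-s) * (y : ℂ))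
    (f' := fun y : ℝ => (1 - s) * (y : ℂ) ^ (1 - s - 1) - (1 - s) * (((n : ℝ) + 1 : ℝ) : ℂ) ^ (-s) * 1)
    (s := Set.Icc ((n : ℝ) + 1) (n + 2)) (C := ‖s‖ * ‖s - 1‖ * ((n : ℝ) + 1) ^ (-s.re - 1))
    (x := (n : ℝ) + 1) (y := n + 2) ?_ ?_ (convex_Icc _ _) ⟨le_rfl, by linarith⟩ ⟨by linarith, le_rfl⟩
  · have h1 : ‖(n : ℝ) + 2 - ((n : ℝ) + 1)‖ = 1 := by norm_num
    rw [h1, mul_one] at key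
    refine le_trans (le_of_eq ?_) key
    congr 1
    unfold zterm
    push_cast
    ring
  · intro y hy
    have := (cpow_real_hasDerivAt (1 - s) (lt_of_lt_of_le hn hy.1))
    exact (this.sub ((Complex.ofRealCLM.hasDerivAt (x := y)).const_mul _)).hasDerivWithinAt
  · intro y hy
    have e : (1 - s) * (y : ℂ) ^ (1 - s - 1) - (1 - s) * (((n : ℝ) + 1 : ℝ) : ℂ) ^ (-s) * 1
      = (1 - s) * ((y : ℂ) ^ (-s) - (((n : ℝ) + 1 : ℝ) : ℂ) ^ (-s)) := by
      have : 1 - s - 1 = -s := by ring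
      rw [this]; ring
    rw [e, norm_mul, norm_sub_rev 1 s]
    have := cpow_diff_bound s hs n hy
    calc _ ≤ ‖s - 1‖ * (‖s‖ * ((n : ℝ) + 1) ^ (-s.re - 1)) := by gcongr
      _ = _ := by ring

lemma summable_nat_add_one_rpow {r : ℝ} (hr : r < -1) : Summable (fun n : ℕ => ((n : ℝ) + 1) ^ r) := by
  have := (summable_nat_add_iff 1).2 (Real.summable_nat_rpow.2 hr)
  simpa using this

lemma zterm_sum_of_one_lt (s : ℂ) (hs : 1 < s.re) : riemannZeta₁ s = 1 + ∑' n, zterm n s := by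
  have hs1 : s ≠ 1 := by rintro rfl; simp at hs
  have h1 : HasSum (fun n : ℕ => (s - 1) * ((n + 1 : ℕ) : ℂ) ^ (-s)) ((s - 1) * riemannZeta s) := by
    apply HasSum.mul_left
    rw [zeta_eq_tsum_one_div_nat_add_one_cpow hs]
    have hsum : Summable (fun n : ℕ => 1 / ((n : ℂ) + 1) ^ s) := by
      have := (summable_nat_add_iff 1).2 (Complex.summable_one_div_nat_cpow.2 hs)
      simpa using this
    have e : (fun n : ℕ => ((n + 1 : ℕ) : ℂ) ^ (-s)) = fun n : ℕ => 1 / ((n : ℂ) + 1) ^ s := by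
      funext n
      rw [Complex.cpow_neg]; push_cast; rw [one_div]
    rw [e]
    exact hsum.hasSum
  have h2 : HasSum (fun n : ℕ => ((n + 2 : ℕ) : ℂ) ^ (1 - s) - ((n + 1 : ℕ) : ℂ) ^ (1 - s)) (0 - 1) := by
    have hz : Summable (fun n : ℕ => zterm n s) := by
      refine Summable.of_norm_bounded (g := fun n : ℕ => ‖s‖ * ‖s - 1‖ * ((n : ℝ) + 1) ^ (-s.re - 1)) ?_
        (fun n => zterm_bound s (by linarith) n)
      exact (summable_nat_add_one_rpow (by linarith)).mul_left _
    have hS : Summable (fun n : ℕ => ((n + 2 : ℕ) : ℂ) ^ (1 - s) - ((n + 1 : ℕ) : ℂ) ^ (1 - s)) := by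
      have := hz.sub h1.summable
      refine this.congr (fun n => ?_)
      unfold zterm; ring
    rw [hS.hasSum_iff_tendsto_nat]
    have : ∀ N : ℕ, ∑ n ∈ range N, (((n + 2 : ℕ) : ℂ) ^ (1 - s) - ((n + 1 : ℕ) : ℂ) ^ (1 - s))
        = ((N + 1 : ℕ) : ℂ) ^ (1 - s) - 1 := by
      intro N
      rw [Finset.sum_range_sub (fun n : ℕ => ((n + 1 : ℕ) : ℂ) ^ (1 - s))]
      simp
    simp_rw [this]
    refine Filter.Tendsto.sub_const ?_ 1
    rw [tendsto_zero_iff_norm_tendsto_zero]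
    have h3 : ∀ N : ℕ, ‖((N + 1 : ℕ) : ℂ) ^ (1 - s)‖ = ((N + 1 : ℕ) : ℝ) ^ (-(s.re - 1)) := by
      intro N
      rw [Complex.norm_natCast_cpow_of_pos (by omega)]
      simp
    simp_rw [h3]
    exact (tendsto_rpow_neg_atTop (by linarith : 0 < s.re - 1)).comp
      (tendsto_natCast_atTop_atTop.comp (Filter.tendsto_add_atTop_nat 1))
  have h3 := (h1.add h2).tsum_eq
  have h4 : (fun n : ℕ => (s - 1) * ((n + 1 : ℕ) : ℂ) ^ (-s) + (((n + 2 : ℕ) : ℂ) ^ (1 - s) - ((n + 1 : ℕ) : ℂ) ^ (1 - s))) = fun n => zterm n s := by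
    funext n; unfold zterm; ring
  rw [h4] at h3
  rw [h3, riemannZeta_eq_inv_sub_mul hs1]
  have : s - 1 ≠ 0 := sub_ne_zero.2 hs1
  field_simp
  ring

lemma zterm_differentiable (n : ℕ) : Differentiable ℂ (zterm n) := by
  unfold zterm
  have h1 : ((n + 1 : ℕ) : ℂ) ≠ 0 := by exact_mod_cast Nat.succ_ne_zero n
  have h2 : ((n + 2 : ℕ) : ℂ) ≠ 0 := by exact_mod_cast Nat.succ_ne_zero (n + 1)
  intro s
  refine DifferentiableAt.sub (DifferentiableAt.add (DifferentiableAt.mul (by fun_prop) ?_) ?_) ?_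
  · exact DifferentiableAt.const_cpow (by fun_prop) (Or.inl h1)
  · exact DifferentiableAt.const_cpow (by fun_prop) (Or.inl h2)
  · exact DifferentiableAt.const_cpow (by fun_prop) (Or.inl h1)

lemma zeta1_eq (s : ℂ) (hs : 1 / 2 ≤ s.re) : riemannZeta₁ s = 1 + ∑' n, zterm n s := by
  set R : ℝ := ‖s‖ + 3
  have hR : 3 ≤ R := by simp [R]
  set V : Set ℂ := {z | 1 / 4 < z.re} ∩ Metric.ball 0 R
  have hVo : IsOpen V := (isOpen_lt continuous_const Complex.continuous_re).inter Metric.isOpen_ball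
  have hVc : Convex ℝ V := (convex_halfSpace_re_gt _).inter (convex_ball _ _)
  have hd : DifferentiableOn ℂ (fun z => ∑' n, zterm n z) V := by
    refine Complex.differentiableOn_tsum_of_summable_norm
      (u := fun n : ℕ => R * (R + 1) * ((n : ℝ) + 1) ^ (-(1 / 4 : ℝ) - 1))
      ((summable_nat_add_one_rpow (by norm_num)).mul_left _)
      (fun n => (zterm_differentiable n).differentiableOn) hVo ?_
    intro n z hz
    have hz1 : 1 / 4 < z.re := hz.1
    have hz2 : ‖z‖ < R := by simpa using hz.2
    refine (zterm_bound z (by linarith) n).trans ?_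
    have : ‖z - 1‖ ≤ R + 1 := (norm_sub_le _ _).trans (by simp; linarith)
    gcongr
    simp
  have h1 : AnalyticOnNhd ℂ riemannZeta₁ V := differentiable_riemannZeta₁.differentiableOn.analyticOnNhd hVo
  have h2 : AnalyticOnNhd ℂ (fun z => 1 + ∑' n, zterm n z) V :=
    ((differentiableOn_const 1).add hd).analyticOnNhd hVo
  have h2V : (2 : ℂ) ∈ V := by
    refine ⟨by norm_num [V], ?_⟩
    simp; linarith
  refine h1.eqOn_of_preconnected_of_eventuallyEq h2 hVc.isPreconnected h2V ?_ ?_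
  · have : {z : ℂ | 1 < z.re} ∈ nhds (2 : ℂ) :=
      (isOpen_lt continuous_const Complex.continuous_re).mem_nhds (by norm_num)
    filter_upwards [this] with z hz using zterm_sum_of_one_lt z hz
  · refine ⟨by simp; linarith, ?_⟩
    simp [R]

lemma zeta1_growth : ∃ C : ℝ, 1 ≤ C ∧ ∀ s : ℂ, 1 / 2 ≤ s.re → ‖riemannZeta₁ s‖ ≤ C * (1 + ‖s‖) ^ 2 := by
  refine ⟨1 + ∑' n : ℕ, ((n : ℝ) + 1) ^ (-(1 / 2 : ℝ) - 1), ?_, ?_⟩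
  · have : 0 ≤ ∑' n : ℕ, ((n : ℝ) + 1) ^ (-(1 / 2 : ℝ) - 1) := tsum_nonneg (fun n => by positivity)
    linarith
  intro s hs
  rw [zeta1_eq s hs]
  have hsum := (summable_nat_add_one_rpow (r := -(1 / 2 : ℝ) - 1) (by norm_num))
  have hb : ‖∑' n, zterm n s‖ ≤ (‖s‖ * ‖s - 1‖) * ∑' n : ℕ, ((n : ℝ) + 1) ^ (-(1 / 2 : ℝ) - 1) := by
    rw [← tsum_mul_left]
    refine tsum_of_norm_bounded (hsum.mul_left _).hasSum (fun n => ?_)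
    refine (zterm_bound s (by linarith) n).trans ?_
    gcongr
    simp
  have h0 : 0 ≤ ∑' n : ℕ, ((n : ℝ) + 1) ^ (-(1 / 2 : ℝ) - 1) := tsum_nonneg (fun n => by positivity)
  have h1 : ‖s - 1‖ ≤ ‖s‖ + 1 := (norm_sub_le _ _).trans (by simp)
  have hn := norm_nonneg s
  have h2 : ‖s‖ * ‖s - 1‖ ≤ (1 + ‖s‖) ^ 2 := by nlinarith
  calc _ ≤ ‖(1 : ℂ)‖ + ‖∑' n, zterm n s‖ := norm_add_le _ _
    _ ≤ 1 + (1 + ‖s‖) ^ 2 * ∑' n : ℕ, ((n : ℝ) + 1) ^ (-(1 / 2 : ℝ) - 1) := by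
        rw [norm_one]; gcongr; exact hb.trans (by gcongr)
    _ ≤ _ := by nlinarith

def RHz : Prop := ∀ s : ℂ, 1 / 2 < s.re → s.re < 1 → riemannZeta s ≠ 0

lemma zeta1_eq_mul (s : ℂ) (hs : s ≠ 1) : riemannZeta₁ s = (s - 1) * riemannZeta s := by
  have : s - 1 ≠ 0 := sub_ne_zero.2 hs
  rw [riemannZeta_eq_inv_sub_mul hs]; field_simp

lemma zeta1_ne_zero (hRH : RHz) (s : ℂ) (hs : 1 / 2 < s.re) : riemannZeta₁ s ≠ 0 := by
  by_cases h1 : s = 1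
  · subst h1; simp
  · rw [zeta1_eq_mul s h1]
    refine mul_ne_zero (sub_ne_zero.2 h1) ?_
    rcases lt_or_ge s.re 1 with h | h
    · exact hRH s hs h
    · exact riemannZeta_ne_zero_of_one_le_re h

lemma logDeriv_bound_BC {f : ℂ → ℂ} {c : ℂ} (hf : DifferentiableOn ℂ f (Metric.ball c (5 / 4)))
    (hne : ∀ z ∈ Metric.ball c (5 / 4), f z ≠ 0) {M : ℝ} (hM : 1 < M)
    (hb : ∀ z ∈ Metric.ball c (5 / 4), ‖f z‖ ≤ M * ‖f c‖) {z : ℂ} (hz : ‖z - c‖ ≤ 9 / 8) :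
    ‖deriv f z / f z‖ ≤ 608 * Real.log M := by
  have hlog : 0 < Real.log M := Real.log_pos hM
  have hopen : IsOpen (Metric.ball c (5 / 4 : ℝ)) := Metric.isOpen_ball
  have hd : DifferentiableOn ℂ (fun z => deriv f z / f z) (Metric.ball c (5 / 4)) :=
    (hf.deriv hopen).div hf hne
  obtain ⟨g, hg0, hg⟩ := hd.isExactOn_ball.with_val_at c 0
  have hcm : c ∈ Metric.ball c (5 / 4 : ℝ) := Metric.mem_ball_self (by norm_num)
  have hfd : ∀ w ∈ Metric.ball c (5 / 4 : ℝ), HasDerivAt f (deriv f w) w := fun w hw =>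
    (hf.differentiableAt (hopen.mem_nhds hw)).hasDerivAt
  have hF : ∀ w ∈ Metric.ball c (5 / 4 : ℝ), HasDerivAt (fun w => f w * Complex.exp (-g w)) 0 w := by
    intro w hw
    have := (hfd w hw).mul ((hg w hw).neg.cexp)
    convert! this using 1
    have := hne w hw
    field_simp
    ring
  have hconst : ∀ w ∈ Metric.ball c (5 / 4 : ℝ), f w * Complex.exp (-g w) = f c := by
    intro w hw
    have := hopen.is_const_of_deriv_eq_zero (convex_ball c (5/4 : ℝ)).isPreconnected
      (f := fun w => f w * Complex.exp (-g w))
      (fun w hw => (hF w hw).differentiableAt.differentiableWithinAt) (fun w hw => (hF w hw).deriv) hw hcm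
    simpa [hg0] using this
  have hre : ∀ w ∈ Metric.ball c (5 / 4 : ℝ), (g w).re ≤ Real.log M := by
    intro w hw
    rw [Real.le_log_iff_exp_le (by linarith)]
    have h1 := hconst w hw
    have h2 : ‖f w‖ * Real.exp (-(g w).re) = ‖f c‖ := by
      rw [← h1, norm_mul, Complex.norm_exp]; simp
    have h3 := hb w hw
    have h4 : 0 < ‖f w‖ := norm_pos_iff.2 (hne w hw)
    rw [← h2, Real.exp_neg] at h3
    have h5 := Real.exp_pos (g w).re
    have h6 : ‖f w‖ * Real.exp (g w).re ≤ ‖f w‖ * M := by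
      calc _ ≤ (M * (‖f w‖ * (Real.exp (g w).re)⁻¹)) * Real.exp (g w).re := by gcongr
        _ = _ := by field_simp
    exact le_of_mul_le_mul_left h6 h4
  have hgd : DifferentiableOn ℂ g (Metric.ball c (5 / 4)) := fun w hw =>
    (hg w hw).differentiableAt.differentiableWithinAt
  have hgb : ∀ w, ‖w - c‖ ≤ 19 / 16 → ‖g w‖ ≤ 38 * Real.log M := by
    intro w hw
    have hmem : ∀ v ∈ Metric.ball (0 : ℂ) (5 / 4), c + v ∈ Metric.ball c (5 / 4 : ℝ) := by
      intro v hv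
      simpa [Metric.mem_ball, dist_eq_norm] using hv
    have := Complex.borelCaratheodory_zero (f := fun v => g (c + v)) (R := 5 / 4) (M := Real.log M)
      (z := w - c) hlog ?_ ?_ (by norm_num) ?_ (by simpa using hg0)
    · have e : c + (w - c) = w := by ring
      simp only [e] at this
      refine this.trans ?_
      rw [div_le_iff₀ (by linarith)]
      nlinarith [norm_nonneg (w - c)]
    · exact hgd.comp (by fun_prop) hmem
    · intro v hv
      exact hre _ (hmem v hv)
    · simp only [Metric.mem_ball, dist_zero_right]; linarith
  have hsub : Metric.closedBall z (1 / 16) ⊆ Metric.ball c (5 / 4) := by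
    intro w hw
    rw [Metric.mem_closedBall, dist_eq_norm] at hw
    rw [Metric.mem_ball, dist_eq_norm]
    have : ‖w - c‖ ≤ ‖w - z‖ + ‖z - c‖ := by
      have : w - c = (w - z) + (z - c) := by ring
      rw [this]; exact norm_add_le _ _
    linarith
  have hzm : z ∈ Metric.ball c (5 / 4 : ℝ) := hsub (Metric.mem_closedBall_self (by norm_num))
  have := Complex.norm_deriv_le_of_forall_mem_sphere_norm_le (c := z) (R := 1 / 16)
    (C := 38 * Real.log M) (f := g) (by norm_num) ?_ ?_
  · rw [(hg z hzm).deriv] at this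
    refine this.trans (by linarith)
  · apply DifferentiableOn.diffContOnCl
    rw [closure_ball z (by norm_num)]
    exact hgd.mono hsub
  · intro w hw
    apply hgb
    rw [mem_sphere_iff_norm] at hw
    have : ‖w - c‖ ≤ ‖w - z‖ + ‖z - c‖ := by
      have : w - c = (w - z) + (z - c) := by ring
      rw [this]; exact norm_add_le _ _
    linarith

lemma norm_LSeries_le {f : ℕ → ℝ} (hf : ∀ n, 0 ≤ f n) (s : ℂ)
    (hs : LSeriesSummable (fun n => (f n : ℂ)) (s.re : ℂ)) :
    ‖LSeries (fun n => (f n : ℂ)) s‖ ≤ (LSeries (fun n => (f n : ℂ)) (s.re : ℂ)).re := by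
  have hterm : ∀ n, ‖LSeries.term (fun n => (f n : ℂ)) s n‖ = (LSeries.term (fun n => (f n : ℂ)) (s.re : ℂ) n).re := by
    intro n
    rw [LSeries.norm_term_eq]
    rcases eq_or_ne n 0 with h | h
    · simp [h]
    · rw [if_neg h, LSeries.term_of_ne_zero h]
      have : ((n : ℂ) ^ (s.re : ℂ)) = (((n : ℝ) ^ s.re : ℝ) : ℂ) := by
        rw [Complex.ofReal_cpow (by positivity)]; simp
      rw [this, ← Complex.ofReal_div, Complex.ofReal_re, Complex.norm_real, Real.norm_eq_abs, abs_of_nonneg (hf n)]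
  have h1 : HasSum (fun n => (LSeries.term (fun n => (f n : ℂ)) (s.re : ℂ) n).re) (LSeries (fun n => (f n : ℂ)) (s.re : ℂ)).re :=
    Complex.hasSum_re hs.hasSum
  exact tsum_of_norm_bounded h1 (fun n => (hterm n).le)

lemma zeta_norm_le (s : ℂ) (hs : 1 < s.re) : ‖riemannZeta s‖ ≤ (riemannZeta (s.re : ℂ)).re := by
  have h := norm_LSeries_le (f := fun _ => 1) (fun _ => zero_le_one) s ?_
  · have e : (fun n : ℕ => ((1 : ℝ) : ℂ)) = 1 := by funext n; simp
    simp only [e] at h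
    rwa [LSeries_one_eq_riemannZeta hs, LSeries_one_eq_riemannZeta (by simpa using hs)] at h
  · have e : (fun n : ℕ => ((1 : ℝ) : ℂ)) = 1 := by funext n; simp
    simp only [e]
    exact LSeriesSummable_one_iff.2 (by simpa using hs)

lemma zetaLD_norm_le (s : ℂ) (hs : 1 < s.re) :
    ‖deriv riemannZeta s / riemannZeta s‖ ≤ (-(deriv riemannZeta (s.re : ℂ) / riemannZeta (s.re : ℂ))).re := by
  have h := norm_LSeries_le (f := fun n => ArithmeticFunction.vonMangoldt n) (fun _ => ArithmeticFunction.vonMangoldt_nonneg) s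
    (ArithmeticFunction.LSeriesSummable_vonMangoldt (by simpa using hs))
  rw [ArithmeticFunction.LSeries_vonMangoldt_eq_deriv_riemannZeta_div hs,
    ArithmeticFunction.LSeries_vonMangoldt_eq_deriv_riemannZeta_div (by simpa using hs)] at h
  rwa [neg_div, norm_neg, neg_div] at h

lemma zeta_two_lower (t : ℝ) : (1 / 4 : ℝ) ≤ ‖riemannZeta (2 + t * I)‖ := by
  have hs : 1 < (2 + t * I : ℂ).re := by simp
  have hz2 : HasSum (fun n : ℕ => (1 : ℝ) / ((n : ℝ) + 2) ^ 2) (π ^ 2 / 6 - 1) := by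
    have := (hasSum_nat_add_iff' 2).2 hasSum_zeta_two
    simpa [Finset.sum_range_succ] using this
  have h1 : riemannZeta (2 + t * I) = 1 + ∑' n : ℕ, 1 / ((n : ℂ) + 2) ^ (2 + t * I : ℂ) := by
    rw [zeta_eq_tsum_one_div_nat_add_one_cpow hs]
    have hsum : Summable (fun n : ℕ => 1 / ((n : ℂ) + 1) ^ (2 + t * I : ℂ)) := by
      have := (summable_nat_add_iff 1).2 (Complex.summable_one_div_nat_cpow.2 hs)
      simpa using this
    rw [hsum.tsum_eq_zero_add]
    congr 1
    · simp
    · congr 1; funext n; congr 2; push_cast; ring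
  have h2 : ‖∑' n : ℕ, 1 / ((n : ℂ) + 2) ^ (2 + t * I : ℂ)‖ ≤ π ^ 2 / 6 - 1 := by
    refine tsum_of_norm_bounded hz2 (fun n => ?_)
    have : ((n : ℂ) + 2) = ((n + 2 : ℕ) : ℂ) := by push_cast; rfl
    rw [this, norm_div, Complex.norm_natCast_cpow_of_pos (by omega)]
    simp
  have hpi : π ^ 2 / 6 - 1 ≤ 3 / 4 := by
    have := Real.pi_lt_d2
    have := Real.pi_pos
    nlinarith
  rw [h1]
  have := norm_sub_le_norm_add (1 : ℂ) (∑' n : ℕ, 1 / ((n : ℂ) + 2) ^ (2 + t * I : ℂ))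
  rw [norm_one] at this
  linarith

lemma zeta1_LD_bound (hRH : RHz) : ∃ K : ℝ, 1 ≤ K ∧ ∀ s : ℂ, 7 / 8 ≤ s.re → s.re ≤ 2 →
    ‖deriv riemannZeta₁ s / riemannZeta₁ s‖ ≤ K * Real.log (5 + |s.im|) := by
  obtain ⟨C, hC1, hC⟩ := zeta1_growth
  have hlC : 0 ≤ Real.log (4 * C) := Real.log_nonneg (by linarith)
  have l5 : 1 ≤ Real.log 5 := by
    rw [Real.le_log_iff_exp_le (by norm_num)]; linarith [Real.exp_one_lt_d9]
  refine ⟨608 * (Real.log (4 * C) + 2), by linarith, ?_⟩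
  intro s hs1 hs2
  set t := s.im
  have hc : ‖riemannZeta₁ (2 + t * I)‖ ≥ 1 / 4 := by
    rw [zeta1_eq_mul _ (by intro h; have := congrArg Complex.re h; norm_num at this), norm_mul]
    have h1 : 1 ≤ ‖(2 + t * I - 1 : ℂ)‖ := by
      refine le_trans ?_ (Complex.abs_re_le_norm _)
      norm_num
    nlinarith [zeta_two_lower t, norm_nonneg (riemannZeta (2 + t * I))]
  have ht := abs_nonneg t
  have hM : 1 < 4 * C * (5 + |t|) ^ 2 := by nlinarith
  have hball : ∀ z ∈ Metric.ball (2 + t * I : ℂ) (5 / 4), 1 / 2 < z.re ∧ 1 + ‖z‖ ≤ 5 + |t| := by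
    intro z hz
    rw [Metric.mem_ball, dist_eq_norm] at hz
    have h1 := Complex.abs_re_le_norm (z - (2 + t * I))
    have h2 : (z - (2 + t * I)).re = z.re - 2 := by simp
    rw [h2] at h1
    constructor
    · have := abs_le.1 (h1.trans hz.le)
      linarith [this.1]
    · have : ‖z‖ ≤ ‖z - (2 + t * I)‖ + ‖(2 + t * I : ℂ)‖ := norm_le_norm_sub_add _ _
      have h3 : ‖(2 + t * I : ℂ)‖ ≤ 2 + |t| := (norm_add_le _ _).trans (by simp)
      linarith
  have key := logDeriv_bound_BC (f := riemannZeta₁) (c := 2 + t * I) (M := 4 * C * (5 + |t|) ^ 2) (z := s)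
    differentiable_riemannZeta₁.differentiableOn
    (fun z hz => zeta1_ne_zero hRH z (hball z hz).1) hM ?_ ?_
  · refine key.trans ?_
    rw [Real.log_mul (by positivity) (by positivity), Real.log_pow]
    have h5 : 1 ≤ Real.log (5 + |t|) := l5.trans (Real.log_le_log (by norm_num) (by linarith))
    push_cast
    nlinarith
  · intro z hz
    have h1 := hC z (hball z hz).1.le
    have h2 := (hball z hz).2
    have h0 : 0 ≤ 1 + ‖z‖ := by positivity
    calc ‖riemannZeta₁ z‖ ≤ C * (1 + ‖z‖) ^ 2 := h1
      _ ≤ C * (5 + |t|) ^ 2 := by gcongr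
      _ = 4 * C * (5 + |t|) ^ 2 * (1 / 4) := by ring
      _ ≤ _ := by gcongr
  · have : s - (2 + t * I) = ((s.re - 2 : ℝ) : ℂ) := by
      apply Complex.ext <;> simp [t]
    rw [this, Complex.norm_real, Real.norm_eq_abs, abs_le]
    constructor <;> linarith

lemma H_LD_eq (s : ℂ) (hs : 1 < s.re) :
    deriv riemannZeta₁ s / riemannZeta₁ s = deriv riemannZeta s / riemannZeta s + 1 / (s - 1) := by
  have h1 : s ≠ 1 := by rintro rfl; simp at hs
  have h2 : s - 1 ≠ 0 := sub_ne_zero.2 h1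
  have h3 : riemannZeta s ≠ 0 := riemannZeta_ne_zero_of_one_le_re hs.le
  have e : riemannZeta₁ =ᶠ[nhds s] fun s => (s - 1) * riemannZeta s := by
    filter_upwards [isOpen_ne.mem_nhds h1] with z hz using zeta1_eq_mul z hz
  have hd : HasDerivAt (fun s => (s - 1) * riemannZeta s) (1 * riemannZeta s + (s - 1) * deriv riemannZeta s) s :=
    ((hasDerivAt_id s).sub_const 1).mul (differentiableAt_riemannZeta h1).hasDerivAt
  rw [e.deriv_eq, hd.deriv, zeta1_eq_mul s h1]
  field_simp
  ring

lemma H_LD_right (hRH : RHz) : ∃ C1 : ℝ, 1 ≤ C1 ∧ ∀ s : ℂ, 1 < s.re → s.re ≤ 2 →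
    ‖deriv riemannZeta₁ s / riemannZeta₁ s‖ ≤ C1 / (s.re - 1) := by
  obtain ⟨K, hK, hb⟩ := zeta1_LD_bound hRH
  have l5 : 0 ≤ Real.log 5 := Real.log_nonneg (by norm_num)
  refine ⟨2 + K * Real.log 5, by nlinarith, fun s hs hs2 => ?_⟩
  have hη : 0 < s.re - 1 := by linarith
  have h1 := zetaLD_norm_le s hs
  have e2 := H_LD_eq (s.re : ℂ) (by simpa using hs)
  have h3 := hb (s.re : ℂ) (by simp; linarith) (by simpa using hs2)
  simp only [ofReal_im, abs_zero, add_zero] at h3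
  have h4 : (-(deriv riemannZeta (s.re : ℂ) / riemannZeta (s.re : ℂ))).re
      ≤ K * Real.log 5 + 1 / (s.re - 1) := by
    have : -(deriv riemannZeta (s.re : ℂ) / riemannZeta (s.re : ℂ)) =
        -(deriv riemannZeta₁ (s.re : ℂ) / riemannZeta₁ (s.re : ℂ)) + ((1 / (s.re - 1) : ℝ) : ℂ) := by
      rw [e2]; push_cast; ring
    rw [this, add_re, ofReal_re]
    have := (Complex.re_le_norm (-(deriv riemannZeta₁ (s.re : ℂ) / riemannZeta₁ (s.re : ℂ))))
    rw [norm_neg] at this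
    linarith
  rw [H_LD_eq s hs]
  have h5 : ‖1 / (s - 1)‖ ≤ 1 / (s.re - 1) := by
    rw [norm_div, norm_one]
    apply one_div_le_one_div_of_le hη
    have := Complex.re_le_norm (s - 1)
    simpa using this
  have h6 : K * Real.log 5 ≤ K * Real.log 5 / (s.re - 1) := by
    rw [le_div_iff₀ hη]; nlinarith [mul_nonneg (by linarith : (0:ℝ) ≤ K) l5]
  calc _ ≤ ‖deriv riemannZeta s / riemannZeta s‖ + ‖1 / (s - 1)‖ := norm_add_le _ _
    _ ≤ K * Real.log 5 / (s.re - 1) + 1 / (s.re - 1) + 1 / (s.re - 1) := by linarith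
    _ = _ := by ring

lemma gauss_norm (s s0 : ℂ) (h : |s.re - s0.re| ≤ 2) :
    ‖cexp ((s - s0) ^ 2)‖ ≤ Real.exp 4 * Real.exp (-(s.im - s0.im) ^ 2) := by
  rw [Complex.norm_exp, ← Real.exp_add]
  apply Real.exp_le_exp.2
  simp [pow_two]
  nlinarith [abs_le.1 h]

lemma log_shift (t v : ℝ) : Real.log (5 + |v|) ≤ Real.log (5 + |t|) + |v - t| := by
  have h1 : 5 + |v| ≤ (5 + |t|) * Real.exp |v - t| := by
    have h2 := Real.add_one_le_exp |v - t|
    have h3 : |v| ≤ |t| + |v - t| := by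
      have := abs_add_le t (v - t); simpa using this
    nlinarith [abs_nonneg t, abs_nonneg (v - t)]
  calc _ ≤ Real.log ((5 + |t|) * Real.exp |v - t|) := Real.log_le_log (by positivity) h1
    _ = _ := by rw [Real.log_mul (by positivity) (by positivity), Real.log_exp]

lemma abs_gauss (v : ℝ) : |v| * Real.exp (-v ^ 2) ≤ 1 := by
  rw [Real.exp_neg, ← div_eq_mul_inv, div_le_one (Real.exp_pos _)]
  have := Real.add_one_le_exp (v ^ 2)
  nlinarith [sq_abs v, sq_nonneg (|v| - 1)]

lemma log5_ge (t : ℝ) : 1 ≤ Real.log (5 + |t|) := by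
  rw [Real.le_log_iff_exp_le (by positivity)]
  linarith [Real.exp_one_lt_d9, abs_nonneg t]

lemma H_LD_strip (hRH : RHz) : ∃ K : ℝ, 1 ≤ K ∧ ∀ t σ : ℝ, 1 ≤ σ →
    σ ≤ 1 + 1 / (1 + Real.log (Real.log (5 + |t|))) →
    ‖deriv riemannZeta₁ (σ + t * I) / riemannZeta₁ (σ + t * I)‖ ≤
      K * (1 + Real.log (Real.log (5 + |t|))) := by
  obtain ⟨K, hK, hb⟩ := zeta1_LD_bound hRH
  obtain ⟨C1, hC1, hr⟩ := H_LD_right hRH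
  have he : 1 ≤ Real.exp 4 := by simp
  refine ⟨(2 * Real.exp 4 * K) ^ (1:ℕ) * (Real.exp 8) * (Real.exp 4 * C1), ?_, fun t σ hσ hσ2 => ?_⟩
  · have h8 : 1 ≤ Real.exp 8 := by simp
    have : 1 ≤ 2 * Real.exp 4 * K := by nlinarith
    calc (1:ℝ) = 1 ^ 1 * 1 * (1 * 1) := by norm_num
      _ ≤ _ := by gcongr
  set ℓ := Real.log (5 + |t|) with hℓ
  have hℓ1 : 1 ≤ ℓ := log5_ge t
  set L := 1 + Real.log ℓ with hL
  have hL1 : 1 ≤ L := by have := Real.log_nonneg hℓ1; linarith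
  have hη : 0 < 1 / L := by positivity
  have hη1 : 1 / L ≤ 1 := by rw [div_le_one (by linarith)]; exact hL1
  set s0 : ℂ := σ + t * I with hs0
  have s0re : s0.re = σ := by simp [hs0]
  have s0im : s0.im = t := by simp [hs0]
  let f : ℂ → ℂ := fun s => deriv riemannZeta₁ s / riemannZeta₁ s * cexp ((s - s0) ^ 2)
  have hdd : Differentiable ℂ (deriv riemannZeta₁) := differentiable_riemannZeta₁.deriv
  have hfd : ∀ s : ℂ, 1 / 2 < s.re → DifferentiableAt ℂ f s := by
    intro s hs
    refine ((hdd s).div (differentiable_riemannZeta₁ s) (zeta1_ne_zero hRH s hs)).mul ?_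
    fun_prop
  have hbd : ∀ s : ℂ, 7/8 ≤ s.re → s.re ≤ 1 + 1 / L → ‖f s‖ ≤ 2 * Real.exp 4 * K * ℓ := by
    intro s h1 h2
    have g1 := hb s h1 (by linarith)
    have g2 := gauss_norm s s0 (by rw [s0re, abs_le]; constructor <;> linarith)
    rw [s0im] at g2
    have g3 := log_shift t s.im
    have g4 := abs_gauss (s.im - t)
    have g5 : Real.exp (-(s.im - t) ^ 2) ≤ 1 := by
      rw [Real.exp_le_one_iff]; nlinarith [sq_nonneg (s.im - t)]
    have g6 := Real.exp_pos (-(s.im - t) ^ 2)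
    calc ‖f s‖ = ‖deriv riemannZeta₁ s / riemannZeta₁ s‖ * ‖cexp ((s - s0) ^ 2)‖ := norm_mul _ _
      _ ≤ (K * (ℓ + |s.im - t|)) * (Real.exp 4 * Real.exp (-(s.im - t) ^ 2)) := by
          gcongr; exact g1.trans (by gcongr)
      _ = Real.exp 4 * K * (ℓ * Real.exp (-(s.im - t) ^ 2) + |s.im - t| * Real.exp (-(s.im - t) ^ 2)) := by ring
      _ ≤ Real.exp 4 * K * (ℓ * 1 + ℓ) := by gcongr; linarith
      _ = _ := by ring
  have key := Complex.HadamardThreeLines.norm_le_interp_of_mem_verticalClosedStrip' (f := f) (l := 7/8) (u := 1 + 1 / L)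
    (z := s0) (a := 2 * Real.exp 4 * K * ℓ) (b := Real.exp 4 * C1 * L) (by linarith)
    (by simp only [Complex.HadamardThreeLines.verticalClosedStrip, Set.mem_preimage, s0re]; constructor <;> linarith)
    ?_ ?_ ?_ ?_
  · have fs0 : f s0 = deriv riemannZeta₁ s0 / riemannZeta₁ s0 := by simp [f]
    rw [fs0, s0re] at key
    refine key.trans ?_
    set θ := (σ - 7/8) / (1 + 1 / L - 7/8) with hθ
    have hden : 0 < 1 + 1/L - 7/8 := by linarith
    have hθ1 : θ ≤ 1 := by rw [hθ, div_le_one hden]; linarith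
    have hθ2 : 1 - θ ≤ 8 / L := by
      rw [hθ, one_sub_div hden.ne', div_le_iff₀ hden]
      have : (8:ℝ) / L = 8 * (1 / L) := by ring
      rw [this]
      nlinarith
    have hθ0 : 0 ≤ θ := by rw [hθ]; apply div_nonneg <;> linarith
    have b1 : 1 ≤ Real.exp 4 * C1 * L := by
      calc (1:ℝ) = 1 * 1 * 1 := by norm_num
        _ ≤ _ := by gcongr
    have a1 : 1 ≤ 2 * Real.exp 4 * K := by nlinarith
    have x1 : (Real.exp 4 * C1 * L) ^ θ ≤ Real.exp 4 * C1 * L := by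
      calc _ ≤ (Real.exp 4 * C1 * L) ^ (1:ℝ) := Real.rpow_le_rpow_of_exponent_le b1 hθ1
        _ = _ := Real.rpow_one _
    have x2 : (2 * Real.exp 4 * K) ^ (1 - θ) ≤ 2 * Real.exp 4 * K := by
      calc _ ≤ (2 * Real.exp 4 * K) ^ (1:ℝ) := Real.rpow_le_rpow_of_exponent_le a1 (by linarith)
        _ = _ := Real.rpow_one _
    have x3 : ℓ ^ (1 - θ) ≤ Real.exp 8 := by
      rw [Real.rpow_def_of_pos (by linarith)]
      apply Real.exp_le_exp.2
      have : Real.log ℓ ≤ L := by linarith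
      calc _ ≤ L * (8 / L) := by
            apply mul_le_mul this hθ2 (by linarith) (by linarith)
        _ = 8 := by field_simp
    rw [Real.mul_rpow (by positivity) (by positivity)]
    calc _ ≤ (2 * Real.exp 4 * K) * Real.exp 8 * (Real.exp 4 * C1 * L) := by gcongr
      _ = _ := by ring
  · apply DifferentiableOn.diffContOnCl
    intro s hs
    have : s ∈ Complex.HadamardThreeLines.verticalClosedStrip (7/8) (1 + 1 / L) := by
      have h2 : closure (Complex.HadamardThreeLines.verticalStrip (7/8) (1 + 1/L)) ⊆ Complex.HadamardThreeLines.verticalClosedStrip (7/8) (1 + 1 / L) := by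
        apply closure_minimal
        · exact Set.preimage_mono Set.Ioo_subset_Icc_self
        · exact isClosed_Icc.preimage Complex.continuous_re
      exact h2 hs
    have h3 : 7/8 ≤ s.re := this.1
    exact (hfd s (by linarith)).differentiableWithinAt
  · refine ⟨2 * Real.exp 4 * K * ℓ, ?_⟩
    rintro _ ⟨s, hs, rfl⟩
    exact hbd s hs.1 hs.2
  · intro z hz
    have hz : z.re = 7/8 := hz
    exact hbd z hz.ge (by rw [hz]; linarith)
  · intro s hz
    have hz : s.re = 1 + 1 / L := hz
    have g1 := hr s (by rw [hz]; linarith) (by rw [hz]; linarith)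
    have g2 := gauss_norm s s0 (by rw [s0re, abs_le]; constructor <;> linarith)
    rw [s0im] at g2
    have g5 : Real.exp (-(s.im - t) ^ 2) ≤ 1 := by
      rw [Real.exp_le_one_iff]; nlinarith [sq_nonneg (s.im - t)]
    calc ‖f s‖ = ‖deriv riemannZeta₁ s / riemannZeta₁ s‖ * ‖cexp ((s - s0) ^ 2)‖ := norm_mul _ _
      _ ≤ (C1 / (s.re - 1)) * (Real.exp 4 * 1) := by
          apply mul_le_mul g1 (g2.trans (by gcongr)) (norm_nonneg _)
          exact (norm_nonneg _).trans g1
      _ = _ := by rw [hz]; field_simp; ring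

lemma zeta_le_inv : ∃ C : ℝ, 1 ≤ C ∧ ∀ x t : ℝ, 0 < x → x ≤ 1 →
    ‖riemannZeta (1 + x + t * I)‖ ≤ C / x := by
  obtain ⟨C, hC1, hC⟩ := zeta1_growth
  refine ⟨C * 9, by linarith, fun x t hx hx1 => ?_⟩
  have h := zeta_norm_le (1 + x + t * I) (by simp [hx])
  refine h.trans ?_
  have e : (1 + x + t * I : ℂ).re = 1 + x := by simp
  rw [e]
  refine (Complex.re_le_norm _).trans ?_
  have h2 := hC ((1 + x : ℝ) : ℂ) (by simp; linarith)
  have hne : (((1 + x : ℝ) : ℂ)) ≠ 1 := by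
    intro h; have := congrArg Complex.re h; simp at this; linarith
  rw [zeta1_eq_mul _ hne, norm_mul] at h2
  have e2 : ‖((1 + x : ℝ) : ℂ) - 1‖ = x := by
    have : ((1 + x : ℝ) : ℂ) - 1 = (x : ℂ) := by push_cast; ring
    rw [this, Complex.norm_real, Real.norm_of_nonneg hx.le]
  have e3 : ‖((1 + x : ℝ) : ℂ)‖ = 1 + x := by
    rw [Complex.norm_real, Real.norm_of_nonneg (by linarith)]
  rw [e2, e3] at h2
  rw [le_div_iff₀ hx]
  have : (1 + (1 + x)) ^ 2 ≤ 9 := by nlinarith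
  nlinarith

lemma H_gronwall (t M a b : ℝ) (hab : a ≤ b)
    (hb : ∀ σ ∈ Set.Icc a b, ‖deriv riemannZeta₁ (σ + t * I)‖ ≤ M * ‖riemannZeta₁ (σ + t * I)‖) :
    ‖riemannZeta₁ (a + t * I)‖ ≤ ‖riemannZeta₁ (b + t * I)‖ * Real.exp (M * (b - a)) := by
  have hd : ∀ y : ℝ, HasDerivAt (fun y : ℝ => riemannZeta₁ ((b - y : ℝ) + t * I))
      (-(deriv riemannZeta₁ ((b - y : ℝ) + t * I))) y := by
    intro y
    have h1 : HasDerivAt (fun y : ℝ => ((b - y : ℝ) : ℂ) + t * I) (-1 : ℂ) y := by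
      have : HasDerivAt (fun y : ℝ => ((b - y : ℝ) : ℂ)) ((-1 : ℝ) : ℂ) y :=
        (((hasDerivAt_id y).const_sub b)).ofReal_comp
      simpa using this.add_const (t * I)
    have h2 := (differentiable_riemannZeta₁ (((b - y : ℝ) : ℂ) + t * I)).hasDerivAt
    have := HasDerivAt.comp y h2 h1
    simpa [Function.comp_def] using this
  have := norm_le_gronwallBound_of_norm_deriv_right_le
    (f := fun y : ℝ => riemannZeta₁ ((b - y : ℝ) + t * I))
    (f' := fun y : ℝ => -(deriv riemannZeta₁ ((b - y : ℝ) + t * I)))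
    (δ := ‖riemannZeta₁ (b + t * I)‖) (K := M) (ε := 0) (a := 0) (b := b - a)
    (fun y _ => (hd y).continuousAt.continuousWithinAt)
    (fun y _ => (hd y).hasDerivWithinAt) (by simp) ?_ (b - a) ⟨by linarith, le_refl _⟩
  · rw [gronwallBound_ε0] at this
    simpa using this
  · intro y hy
    rw [norm_neg, add_zero]
    exact hb (b - y) ⟨by linarith [hy.2], by linarith [hy.1]⟩

lemma loglog_cmp (t : ℝ) (ht : 10 ≤ t) :
    1 + Real.log (Real.log (5 + t)) ≤ 4 * Real.log (Real.log t) := by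
  have l10 : 2 ≤ Real.log 10 := by
    rw [Real.le_log_iff_exp_le (by norm_num)]
    have : Real.exp 2 = Real.exp 1 * Real.exp 1 := by rw [← Real.exp_add]; norm_num
    rw [this]; nlinarith [Real.exp_one_lt_d9, Real.exp_pos 1]
  have lt : 2 ≤ Real.log t := l10.trans (Real.log_le_log (by norm_num) ht)
  have h1 : Real.log (5 + t) ≤ 2 * Real.log t := by
    calc _ ≤ Real.log (2 * t) := Real.log_le_log (by linarith) (by linarith)
      _ = Real.log 2 + Real.log t := Real.log_mul (by norm_num) (by linarith)
      _ ≤ _ := by linarith [Real.log_two_lt_d9]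
  have h2 : Real.log (Real.log (5 + t)) ≤ Real.log 2 + Real.log (Real.log t) := by
    rw [← Real.log_mul (by norm_num) (by linarith)]
    exact Real.log_le_log (Real.log_pos (by linarith)) h1
  have h3 : Real.log 2 ≤ Real.log (Real.log t) := Real.log_le_log (by norm_num) lt
  linarith [Real.log_two_gt_d9]

lemma zeta_bounds (hRH : RHz) : ∃ C : ℝ, 1 ≤ C ∧ ∀ δ t : ℝ, 0 < δ → δ ≤ 1 →
    ‖riemannZeta (1 + δ + t * I)‖ ≤ C / δ ∧
    (t ≠ 0 → |t| ≤ 10 → ‖riemannZeta (1 + δ + t * I)‖ ≤ C / |t|) ∧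
    (10 ≤ |t| → ‖riemannZeta (1 + δ + t * I)‖ ≤ C * Real.log (Real.log |t|)) := by
  obtain ⟨C1, hC1, h1⟩ := zeta_le_inv
  obtain ⟨C2, hC2, h2⟩ := zeta1_growth
  obtain ⟨K, hK, h3⟩ := H_LD_strip hRH
  have heK : 1 ≤ Real.exp K := by rw [Real.one_le_exp_iff]; linarith
  have hC0 : 0 ≤ C1 * Real.exp K * 8 := by positivity
  refine ⟨C1 + C2 * 169 + C1 * Real.exp K * 8, by linarith, fun δ t hδ hδ1 => ?_⟩
  have hne : (1 + δ + t * I : ℂ) ≠ 1 := by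
    intro h; have := congrArg Complex.re h; simp at this; linarith
  have hH : ‖riemannZeta₁ (1 + δ + t * I)‖ = ‖(δ + t * I : ℂ)‖ * ‖riemannZeta (1 + δ + t * I)‖ := by
    rw [zeta1_eq_mul _ hne, norm_mul]; congr 2; ring
  have him : |t| ≤ ‖(δ + t * I : ℂ)‖ := by
    have := Complex.abs_im_le_norm (δ + t * I : ℂ); simpa using this
  refine ⟨(h1 δ t hδ hδ1).trans ?_, fun ht ht10 => ?_, fun ht => ?_⟩
  · gcongr; linarith
  · have g := h2 (1 + δ + t * I) (by simp; linarith)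
    have hn : ‖(1 + δ + t * I : ℂ)‖ ≤ 12 := by
      have := Complex.norm_le_abs_re_add_abs_im (1 + δ + t * I : ℂ)
      simp at this
      rw [abs_of_pos (by linarith : 0 < 1 + δ)] at this
      linarith
    rw [hH] at g
    rw [le_div_iff₀ (abs_pos.2 ht)]
    have hz := norm_nonneg (riemannZeta (1 + δ + t * I))
    have : (1 + ‖(1 + δ + t * I : ℂ)‖) ^ 2 ≤ 169 := by
      nlinarith [norm_nonneg (1 + δ + t * I : ℂ)]
    nlinarith [mul_le_mul_of_nonneg_right him hz]
  · have hcmp := loglog_cmp |t| ht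
    set L := 1 + Real.log (Real.log (5 + |t|)) with hL
    have hL1 : 1 ≤ L := by have := Real.log_nonneg (log5_ge t); linarith
    have hmain : ‖riemannZeta (1 + δ + t * I)‖ ≤ C1 * Real.exp K * 2 * L := by
      rcases le_or_gt (1 / L) δ with hc | hc
      · refine (h1 δ t hδ hδ1).trans ?_
        have hx : 1 ≤ δ * L := by
          rwa [div_le_iff₀ (by linarith)] at hc
        rw [div_le_iff₀ hδ]
        calc C1 = C1 * 1 * 1 * 1 := by ring
          _ ≤ C1 * Real.exp K * 2 * (δ * L) := by gcongr; norm_num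
          _ = _ := by ring
      · have hη1 : 1 / L ≤ 1 := by rw [div_le_one (by linarith)]; exact hL1
        have g := H_gronwall t (K * L) (1 + δ) (1 + 1 / L) (by linarith) ?_
        · push_cast at g
          have hne' : ((1 + 1 / L + t * I : ℂ)) ≠ 1 := by
            intro h; have := congrArg Complex.im h; simp at this; rw [this] at ht; norm_num at ht
          have e1 : ‖riemannZeta₁ (1 + 1 / L + t * I)‖ ≤ (2 * |t|) * (C1 * L) := by
            rw [zeta1_eq_mul _ hne', norm_mul]
            gcongr
            · have : (1 + 1 / L + t * I - 1 : ℂ) = ((1 / L : ℝ) : ℂ) + t * I := by push_cast; ring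
              rw [this]
              have := Complex.norm_le_abs_re_add_abs_im (((1 / L : ℝ) : ℂ) + t * I : ℂ)
              simp only [add_re, ofReal_re, mul_re, I_re, mul_zero, ofReal_im, I_im, mul_one, sub_self, add_zero,
                add_im, mul_im, zero_add] at this
              rw [abs_of_pos (by positivity : 0 < 1 / L)] at this
              linarith
            · have := h1 (1 / L) t (by positivity) hη1
              push_cast at this
              refine this.trans (le_of_eq ?_)
              field_simp
          have e2 : Real.exp (K * L * (1 + 1 / L - (1 + δ))) ≤ Real.exp K := by
            apply Real.exp_le_exp.2
            calc _ ≤ K * L * (1 / L) := by gcongr; linarith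
              _ = K := by field_simp
          have e3 : |t| * ‖riemannZeta (1 + δ + t * I)‖ ≤ |t| * (C1 * Real.exp K * 2 * L) := by
            calc _ ≤ ‖riemannZeta₁ (1 + δ + t * I)‖ := by rw [hH]; gcongr
              _ ≤ _ := g
              _ ≤ (2 * |t|) * (C1 * L) * Real.exp K := by gcongr
              _ = _ := by ring
          exact le_of_mul_le_mul_left e3 (by linarith)
        · intro σ hσ
          have := h3 t σ (by linarith [hσ.1]) hσ.2
          rw [norm_div, div_le_iff₀ (norm_pos_iff.2 (zeta1_ne_zero hRH _ (by simp; linarith [hσ.1])))] at this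
          exact this
    refine hmain.trans ?_
    have hll : 0 ≤ Real.log (Real.log |t|) := by linarith
    calc _ ≤ C1 * Real.exp K * 2 * (4 * Real.log (Real.log |t|)) := by gcongr
      _ = C1 * Real.exp K * 8 * Real.log (Real.log |t|) := by ring
      _ ≤ _ := by gcongr; linarith

lemma RHz_of_dirichlet (q : ℕ) [NeZero q]
    (h : ∀ s : ℂ, 0 < s.re → s.re < 1 → DirichletCharacter.LFunction (1 : DirichletCharacter ℂ q) s = 0 → s.re = 1 / 2) :
    RHz := by
  intro s hs hs1 h0
  have := h s (by linarith) hs1 ?_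
  · linarith
  · have e := DirichletCharacter.LFunctionTrivChar_eq_mul_riemannZeta (N := q) (s := s) (by rintro rfl; simp at hs1)
    rw [h0, mul_zero] at e
    exact e

lemma sum_logp_le (N : ℕ) :
    ∑ p ∈ (Ioc 0 N).filter Nat.Prime, Real.log p / p ≤ 2 * Real.log N := by
  rcases Nat.eq_zero_or_pos N with rfl | hN
  · simp
  have hN' : (0:ℝ) < N := by exact_mod_cast hN
  have h1 : ∀ n ∈ Ioc 0 N, ∑ p ∈ ((Ioc 0 N).filter Nat.Prime).filter (fun p => p ∣ n), Real.log p ≤ Real.log N := by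
    intro n hn
    rw [mem_Ioc] at hn
    have e : ((Ioc 0 N).filter Nat.Prime).filter (fun p => p ∣ n) ⊆ n.primeFactors := by
      intro p hp
      simp only [mem_filter, mem_Ioc] at hp
      rw [Nat.mem_primeFactors]
      exact ⟨hp.1.2, hp.2, by omega⟩
    calc _ ≤ ∑ p ∈ n.primeFactors, Real.log p := by
          apply sum_le_sum_of_subset_of_nonneg e
          intro p hp _
          exact Real.log_natCast_nonneg p
      _ = Real.log (∏ p ∈ n.primeFactors, (p:ℝ)) := by
          rw [Real.log_prod]
          intro p hp
          exact_mod_cast (Nat.prime_of_mem_primeFactors hp).ne_zero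
      _ ≤ Real.log n := by
          apply Real.log_le_log
          · apply prod_pos; intro p hp; exact_mod_cast (Nat.prime_of_mem_primeFactors hp).pos
          · rw [← Nat.cast_prod]; exact_mod_cast Nat.le_of_dvd hn.1 (Nat.prod_primeFactors_dvd n)
      _ ≤ _ := Real.log_le_log (by exact_mod_cast hn.1) (by exact_mod_cast hn.2)
  have h2 : ∑ n ∈ Ioc 0 N, ∑ p ∈ ((Ioc 0 N).filter Nat.Prime).filter (fun p => p ∣ n), Real.log p ≤ N * Real.log N := by
    refine (sum_le_sum h1).trans ?_
    simp
  have h3 : ∑ n ∈ Ioc 0 N, ∑ p ∈ ((Ioc 0 N).filter Nat.Prime).filter (fun p => p ∣ n), Real.log p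
      = ∑ p ∈ (Ioc 0 N).filter Nat.Prime, ((N / p : ℕ) : ℝ) * Real.log p := by
    simp_rw [sum_filter (p := fun p => p ∣ _)]
    rw [sum_comm]
    apply sum_congr rfl
    intro p hp
    rw [← sum_filter, sum_const, Nat.Ioc_filter_dvd_card_eq_div, nsmul_eq_mul]
  rw [h3] at h2
  have h4 : ∀ p ∈ (Ioc 0 N).filter Nat.Prime, N * (Real.log p / p) ≤ 2 * (((N / p : ℕ) : ℝ) * Real.log p) := by
    intro p hp
    simp only [mem_filter, mem_Ioc] at hp
    have hp0 : (0:ℝ) < p := by exact_mod_cast hp.1.1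
    have hd : N ≤ 2 * (N / p) * p := by
      have h5 : 1 ≤ N / p := (Nat.one_le_div_iff hp.1.1).2 hp.1.2
      have h6 := Nat.div_add_mod N p
      have h7 := Nat.mod_lt N hp.1.1
      nlinarith
    have hd' : (N:ℝ) ≤ 2 * ((N / p : ℕ):ℝ) * p := by exact_mod_cast hd
    have hl : 0 ≤ Real.log p := Real.log_natCast_nonneg p
    rw [← mul_div_assoc, div_le_iff₀ hp0]
    nlinarith
  have h5 := sum_le_sum h4
  rw [← mul_sum, ← mul_sum] at h5
  have : N * (∑ p ∈ (Ioc 0 N).filter Nat.Prime, Real.log p / p) ≤ N * (2 * Real.log N) := by nlinarith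
  exact le_of_mul_le_mul_left this hN'

/-- block sum bound -/
lemma block_sum_le (S : Finset ℕ) (y z : ℝ) (hy : 1 < y) (hz : z ≤ y ^ 20)
    (hS : ∀ p ∈ S, p.Prime ∧ y < p ∧ (p:ℝ) ≤ z) : ∑ p ∈ S, 1 / (p:ℝ) ≤ 40 := by
  have hly := Real.log_pos hy
  rcases S.eq_empty_or_nonempty with rfl | ⟨p0, hp0⟩
  · simp
  have hz0 : y < z := (hS p0 hp0).2.1.trans_le (hS p0 hp0).2.2
  have hz1 : 1 ≤ z := by linarith
  set N := ⌊z⌋₊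
  have hN : 1 ≤ N := Nat.le_floor (by exact_mod_cast hz1)
  have h1 : Real.log y * ∑ p ∈ S, 1 / (p:ℝ) ≤ ∑ p ∈ (Ioc 0 N).filter Nat.Prime, Real.log p / p := by
    rw [mul_sum]
    calc _ ≤ ∑ p ∈ S, Real.log p / p := by
          apply sum_le_sum
          intro p hp
          rw [mul_one_div]
          gcongr
          exact (hS p hp).2.1.le
      _ ≤ _ := by
          apply sum_le_sum_of_subset_of_nonneg
          · intro p hp
            rw [mem_filter, mem_Ioc]
            exact ⟨⟨(hS p hp).1.pos, Nat.le_floor (hS p hp).2.2⟩, (hS p hp).1⟩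
          · intro p _ _; exact div_nonneg (Real.log_natCast_nonneg p) (by positivity)
  have h2 := sum_logp_le N
  have h3 : Real.log N ≤ 20 * Real.log y := by
    calc _ ≤ Real.log (y ^ 20) := by
          apply Real.log_le_log (by exact_mod_cast hN)
          exact (Nat.floor_le (by linarith)).trans hz
      _ = _ := by rw [Real.log_pow]; norm_num
  have : Real.log y * ∑ p ∈ S, 1 / (p:ℝ) ≤ Real.log y * 40 := by linarith
  exact le_of_mul_le_mul_left this hly

noncomputable def Pz (s : ℂ) : ℂ := ∑' p : Nat.Primes, (p : ℂ) ^ (-s)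

lemma prime_norm_cpow (p : Nat.Primes) (s : ℂ) : ‖(p : ℂ) ^ (-s)‖ = (p : ℝ) ^ (-s.re) := by
  have : (0:ℝ) < (p:ℕ) := by exact_mod_cast p.2.pos
  have h := Complex.norm_cpow_eq_rpow_re_of_pos this (-s)
  simpa using h

lemma Pz_summable (s : ℂ) (hs : 1 < s.re) : Summable (fun p : Nat.Primes => (p : ℂ) ^ (-s)) := by
  apply Summable.of_norm
  simp_rw [prime_norm_cpow]
  exact (Nat.Primes.summable_rpow).2 (by linarith)

lemma exp_Pz_le : ∃ C : ℝ, 1 ≤ C ∧ ∀ s : ℂ, 1 < s.re →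
    Real.exp (Pz s).re ≤ C * ‖riemannZeta s‖ := by
  have hs2 : Summable (fun p : Nat.Primes => (p : ℝ) ^ (-2 : ℝ)) :=
    (Nat.Primes.summable_rpow).2 (by norm_num)
  refine ⟨Real.exp (∑' p : Nat.Primes, (p : ℝ) ^ (-2 : ℝ)), ?_, fun s hs => ?_⟩
  · rw [Real.one_le_exp_iff]; exact tsum_nonneg (fun p => by positivity)
  rw [← riemannZeta_eulerProduct_exp_log hs, Complex.norm_exp, ← Real.exp_add]
  apply Real.exp_le_exp.2
  have hb : ∀ p : Nat.Primes, ‖(-Complex.log (1 - (p:ℂ) ^ (-s))) - (p:ℂ) ^ (-s)‖ ≤ (p : ℝ) ^ (-2 : ℝ) := by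
    intro p
    have hp2 : (2:ℝ) ≤ (p:ℕ) := by exact_mod_cast p.2.two_le
    have hn : ‖-(p:ℂ) ^ (-s)‖ ≤ (p:ℝ) ^ (-1:ℝ) := by
      rw [norm_neg, prime_norm_cpow]
      exact Real.rpow_le_rpow_of_exponent_le (by linarith) (by linarith)
    have hh : (p:ℝ) ^ (-1:ℝ) ≤ 1/2 := by
      rw [Real.rpow_neg_one, inv_eq_one_div]
      exact one_div_le_one_div_of_le (by norm_num) hp2
    have := norm_log_one_add_sub_self_le (z := -(p:ℂ) ^ (-s)) (by linarith)
    have e : (-Complex.log (1 - (p:ℂ) ^ (-s))) - (p:ℂ) ^ (-s) = -(Complex.log (1 + -(p:ℂ) ^ (-s)) - -(p:ℂ) ^ (-s)) := by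
      rw [← sub_eq_add_neg]; ring
    rw [e, norm_neg]
    refine this.trans ?_
    have hinv : (1 - ‖-(p:ℂ) ^ (-s)‖)⁻¹ ≤ 2 := by
      rw [inv_le_comm₀ (by linarith) (by norm_num)]; linarith
    calc _ ≤ ((p:ℝ) ^ (-1:ℝ)) ^ 2 * 2 / 2 := by
          gcongr
          rw [inv_nonneg]; linarith
      _ = _ := by
        rw [← Real.rpow_natCast, ← Real.rpow_mul (by positivity)]; norm_num
  have hsd : Summable (fun p : Nat.Primes => (-Complex.log (1 - (p:ℂ) ^ (-s))) - (p:ℂ) ^ (-s)) :=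
    Summable.of_norm_bounded hs2 hb
  have hP := Pz_summable s hs
  have e : ∑' p : Nat.Primes, -Complex.log (1 - (p:ℂ) ^ (-s)) =
      ∑' p : Nat.Primes, ((-Complex.log (1 - (p:ℂ) ^ (-s))) - (p:ℂ) ^ (-s)) + Pz s := by
    rw [Pz, ← Summable.tsum_add hsd hP]; congr 1; funext p; ring
  rw [e, add_re]
  have h3 := tsum_of_norm_bounded hs2.hasSum hb
  have h4 := Complex.abs_re_le_norm (∑' p : Nat.Primes, ((-Complex.log (1 - (p:ℂ) ^ (-s))) - (p:ℂ) ^ (-s)))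
  have := (abs_le.1 (h4.trans h3)).1
  linarith

lemma sum_primes_le_tsum (S : Finset ℕ) (hS : ∀ p ∈ S, p.Prime) (f : ℕ → ℝ) (hf : ∀ p, 0 ≤ f p)
    (hs : Summable (fun p : Nat.Primes => f p)) : ∑ p ∈ S, f p ≤ ∑' p : Nat.Primes, f p := by
  have e : ∑ p ∈ S, f p = ∑ p ∈ S.subtype Nat.Prime, f p := by
    rw [Finset.sum_subtype_eq_sum_filter, filter_true_of_mem hS]
  rw [e]
  have key : ∀ T : Finset Nat.Primes, ∑ p ∈ T, f p ≤ ∑' p : Nat.Primes, f p := fun T =>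
    hs.sum_le_tsum T (fun p _ => hf p)
  exact key (S.subtype Nat.Prime)

lemma Pz_real (x : ℝ) (hx : 1 < x) : (Pz (x:ℂ)).re = ∑' p : Nat.Primes, (p:ℝ) ^ (-x) := by
  rw [Pz, Complex.re_tsum (L := SummationFilter.unconditional _) (Pz_summable _ (by simpa using hx))]
  congr 1; funext p
  have : ((p:ℝ) ^ (-x) : ℝ) = (((p:ℝ) ^ (-x) : ℝ) : ℂ).re := rfl
  rw [this, Complex.ofReal_cpow (by positivity)]; push_cast; rfl

lemma sum_inv_primes_le : ∃ C : ℝ, 0 ≤ C ∧ ∀ (x : ℝ), Real.exp 1 ≤ x → ∀ S : Finset ℕ,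
    (∀ p ∈ S, p.Prime ∧ (p:ℝ) ≤ x) → ∑ p ∈ S, 1 / (p:ℝ) ≤ 3 * Real.log (Real.log x) + C := by
  obtain ⟨C1, hC1, h1⟩ := exp_Pz_le
  obtain ⟨C2, hC2, h2⟩ := zeta_le_inv
  have hlC : 0 ≤ Real.log (C1 * C2) := Real.log_nonneg (by nlinarith)
  refine ⟨3 * Real.log (C1 * C2), by positivity, fun x hx S hS => ?_⟩
  have hx0 : 0 < x := (Real.exp_pos 1).trans_le hx
  have hlx : 1 ≤ Real.log x := by rwa [Real.le_log_iff_exp_le hx0]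
  set δ := 1 / Real.log x with hδ
  have hδ0 : 0 < δ := by positivity
  have hδ1 : δ ≤ 1 := by rw [hδ, div_le_one (by linarith)]; exact hlx
  have g1 := h1 ((1 + δ : ℝ) : ℂ) (by simp [hδ0])
  have g2 := h2 δ 0 hδ0 hδ1
  have g3 : Real.exp (Pz ((1 + δ : ℝ) : ℂ)).re ≤ C1 * C2 * Real.log x := by
    refine g1.trans ?_
    simp only [ofReal_zero, zero_mul, add_zero] at g2
    push_cast
    calc _ ≤ C1 * (C2 / δ) := by gcongr
      _ = _ := by rw [hδ]; field_simp
  have g4 : (Pz ((1 + δ : ℝ) : ℂ)).re ≤ Real.log (C1 * C2) + Real.log (Real.log x) := by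
    rw [← Real.log_mul (by positivity) (by positivity)]
    rw [Real.le_log_iff_exp_le (by positivity)]; exact g3
  have g5 : ∑ p ∈ S, 1 / (p:ℝ) ≤ 3 * (Pz ((1 + δ : ℝ) : ℂ)).re := by
    rw [Pz_real _ (by linarith)]
    calc _ ≤ ∑ p ∈ S, 3 * (p:ℝ) ^ (-(1 + δ)) := by
          apply sum_le_sum
          intro p hp
          have hp0 : (0:ℝ) < p := by exact_mod_cast (hS p hp).1.pos
          have hp1 : (1:ℝ) ≤ p := by exact_mod_cast (hS p hp).1.one_le
          rw [neg_add, Real.rpow_add hp0, Real.rpow_neg_one, one_div]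
          have : Real.exp (-1) ≤ (p:ℝ) ^ (-δ) := by
            rw [Real.rpow_def_of_pos hp0]
            apply Real.exp_le_exp.2
            have : Real.log p ≤ Real.log x := Real.log_le_log hp0 (hS p hp).2
            have : Real.log p * δ ≤ 1 := by rw [hδ, mul_one_div, div_le_one (by linarith)]; exact this
            linarith
          have h3 : 1 ≤ 3 * Real.exp (-1) := by
            rw [Real.exp_neg, ← div_eq_mul_inv, le_div_iff₀ (Real.exp_pos _)]; linarith [Real.exp_one_lt_d9]
          have : 1 ≤ 3 * (p:ℝ) ^ (-δ) := by linarith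
          have hpi : 0 < (p:ℝ)⁻¹ := by positivity
          nlinarith
      _ = 3 * ∑ p ∈ S, (p:ℝ) ^ (-(1 + δ)) := by rw [mul_sum]
      _ ≤ _ := by
          gcongr
          exact sum_primes_le_tsum S (fun p hp => (hS p hp).1) (fun p => (p:ℝ) ^ (-(1 + δ)))
            (fun p => by positivity) ((Nat.Primes.summable_rpow).2 (by linarith))
  linarith

lemma zeta_gfun (hRH : RHz) : ∃ C : ℝ, 1 ≤ C ∧ ∀ (q : ℕ) (δ t : ℝ), 0 < Real.log q → 1 / Real.log q ≤ δ → δ ≤ 1 →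
    |t| < Real.exp q → ‖riemannZeta (1 + δ + t * I)‖ ≤ C * gfun q |t| := by
  obtain ⟨C, hC, h⟩ := zeta_bounds hRH
  refine ⟨C, hC, fun q δ t hq hδ hδ1 ht => ?_⟩
  have hδ0 : 0 < δ := lt_of_lt_of_le (by positivity) hδ
  obtain ⟨h1, h2, h3⟩ := h δ t hδ0 hδ1
  unfold gfun
  split_ifs with c1 c2
  · refine h1.trans ?_
    rw [div_eq_mul_inv]
    gcongr
    rw [inv_le_comm₀ hδ0 hq, inv_eq_one_div]; exact hδ
  · push Not at c1
    have : 0 < |t| := lt_trans (by positivity) c1.1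
    refine (h2 (abs_pos.1 this) c2).trans (le_of_eq (by ring))
  · exact h3 (by linarith)

lemma gfun_nonneg (q : ℕ) (x : ℝ) (hx : 0 ≤ x) : 0 ≤ gfun q x := by
  unfold gfun
  split_ifs with c1 c2
  · exact Real.log_natCast_nonneg q
  · positivity
  · have := loglog_cmp x (by linarith)
    have h2 := Real.log_nonneg (log5_ge x)
    rw [abs_of_nonneg hx] at h2
    linarith

lemma normsq_h {n : ℕ} (a t : Fin n → ℝ) (p : ℕ) (hp : 0 < p) :
    ‖(1 / 2 : ℂ) * ∑ j, (a j : ℂ) * (p : ℂ) ^ (-(t j) * Complex.I)‖ ^ 2 =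
      ∑ i, ∑ j, (a i * a j / 4) * ((p:ℂ) ^ (-((t i - t j : ℝ) * I))).re := by
  have hp0 : (p:ℂ) ≠ 0 := by exact_mod_cast hp.ne'
  have hc : ∀ j, (starRingEnd ℂ) ((p : ℂ) ^ (-(t j) * Complex.I)) = (p:ℂ) ^ ((t j) * I) := by
    intro j
    have := Complex.cpow_conj (p:ℂ) (-(t j) * Complex.I) (by rw [Complex.natCast_arg]; exact Real.pi_pos.ne)
    rw [Complex.conj_natCast] at this
    rw [← this]; simp
  rw [← Complex.normSq_eq_norm_sq]
  have e : ((Complex.normSq ((1 / 2 : ℂ) * ∑ j, (a j : ℂ) * (p : ℂ) ^ (-(t j) * Complex.I)) : ℝ) : ℂ)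
     = ∑ i, ∑ j, ((a i * a j / 4 : ℝ) : ℂ) * ((p:ℂ) ^ (-((t i - t j : ℝ) * I))) := by
    rw [Complex.normSq_eq_conj_mul_self, map_mul, map_sum]
    simp_rw [map_mul, hc]
    simp only [Complex.conj_ofReal, map_div₀, map_one, map_ofNat]
    rw [show (1/2 * ∑ x, (a x:ℂ) * (p:ℂ) ^ ((t x:ℂ) * I)) * (1/2 * ∑ j, (a j : ℂ) * (p : ℂ) ^ (-(t j:ℂ) * Complex.I))
      = (1/4) * ((∑ j, (a j : ℂ) * (p : ℂ) ^ (-(t j:ℂ) * Complex.I)) * ∑ x, (a x:ℂ) * (p:ℂ) ^ ((t x:ℂ) * I)) by ring]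
    rw [sum_mul_sum, mul_sum]
    apply sum_congr rfl; intro i _
    rw [mul_sum]
    apply sum_congr rfl; intro j _
    have : (-((t i - t j : ℝ) * I) : ℂ) = -(t i:ℂ) * I + (t j : ℂ) * I := by push_cast; ring
    rw [this, Complex.cpow_add _ _ hp0]
    push_cast; ring
  have := congrArg Complex.re e
  rw [ofReal_re] at this
  rw [this, re_sum]
  apply sum_congr rfl; intro i _
  rw [re_sum]
  apply sum_congr rfl; intro j _
  rw [re_ofReal_mul]

lemma sum_hsq_le {n : ℕ} (a t : Fin n → ℝ) (δ : ℝ) (hδ : 0 < δ) (S : Finset ℕ) (hS : ∀ p ∈ S, p.Prime) :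
    ∑ p ∈ S, ‖(1 / 2 : ℂ) * ∑ j, (a j : ℂ) * (p : ℂ) ^ (-(t j) * Complex.I)‖ ^ 2 * (p:ℝ) ^ (-(1 + δ)) ≤
      ∑ i, ∑ j, (a i * a j / 4) * (Pz (1 + δ + (t i - t j : ℝ) * I)).re := by
  let F : ℕ → ℝ := fun p => ‖(1 / 2 : ℂ) * ∑ j, (a j : ℂ) * (p : ℂ) ^ (-(t j) * Complex.I)‖ ^ 2 * (p:ℝ) ^ (-(1 + δ))
  have hF : ∀ p : Nat.Primes, F p = ∑ i, ∑ j, (a i * a j / 4) * ((p:ℂ) ^ (-(1 + δ + (t i - t j : ℝ) * I))).re := by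
    intro p
    have hp0 : (0:ℝ) ≤ (p:ℕ) := by positivity
    have hpc : ((p:ℕ):ℂ) ≠ 0 := by exact_mod_cast p.2.ne_zero
    simp only [F]
    rw [normsq_h a t p p.2.pos, sum_mul]
    apply sum_congr rfl; intro i _
    rw [sum_mul]
    apply sum_congr rfl; intro j _
    have : (-(1 + δ + (t i - t j : ℝ) * I) : ℂ) = ((-(1 + δ) : ℝ):ℂ) + -((t i - t j : ℝ) * I) := by push_cast; ring
    rw [this, Complex.cpow_add _ _ hpc]
    have e2 := Complex.ofReal_cpow hp0 (-(1 + δ))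
    rw [Complex.ofReal_natCast] at e2
    rw [← e2, re_ofReal_mul]; ring
  have hsum : ∀ i j, Summable (fun p : Nat.Primes => (a i * a j / 4) * ((p:ℂ) ^ (-(1 + δ + (t i - t j : ℝ) * I))).re) := by
    intro i j
    apply Summable.mul_left
    have := Pz_summable (1 + δ + (t i - t j : ℝ) * I) (by simp [hδ])
    exact (Complex.hasSum_re this.hasSum).summable
  have hsumF : HasSum (fun p : Nat.Primes => F p) (∑ i, ∑ j, (a i * a j / 4) * (Pz (1 + δ + (t i - t j : ℝ) * I)).re) := by
    simp_rw [hF]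
    apply hasSum_sum; intro i _
    apply hasSum_sum; intro j _
    apply HasSum.mul_left
    have := Pz_summable (1 + δ + (t i - t j : ℝ) * I) (by simp [hδ])
    exact (Complex.hasSum_re this.hasSum)
  rw [← hsumF.tsum_eq]
  exact sum_primes_le_tsum S hS F (fun p => by positivity) hsumF.summable

lemma prod_sym {n : ℕ} (F : Fin n → Fin n → ℝ) (hF : ∀ i j, F i j = F j i) :
    ∏ i, ∏ j, F i j = (∏ i, F i i) * ∏ i, ∏ j, if i < j then F i j ^ 2 else 1 := by
  have h1 : ∀ i j, F i j = (if i = j then F i j else 1) * ((if i < j then F i j else 1) * (if j < i then F i j else 1)) := by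
    intro i j
    rcases lt_trichotomy i j with h | h | h
    · simp [h, h.ne, h.not_gt]
    · simp [h]
    · simp [h, h.ne', h.not_gt]
  have h2 : ∏ i, ∏ j, (if j < i then F i j else 1) = ∏ i, ∏ j, (if i < j then F i j else 1) := by
    rw [prod_comm]; simp_rw [hF]
  calc ∏ i, ∏ j, F i j = ∏ i, ∏ j, ((if i = j then F i j else 1) * ((if i < j then F i j else 1) * (if j < i then F i j else 1))) := by
        apply prod_congr rfl; intro i _; apply prod_congr rfl; intro j _; exact h1 i j
    _ = (∏ i, F i i) * ((∏ i, ∏ j, (if i < j then F i j else 1)) * (∏ i, ∏ j, (if i < j then F i j else 1))) := by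
        simp_rw [prod_mul_distrib]
        rw [h2]; simp
    _ = _ := by
        rw [← prod_mul_distrib]
        simp_rw [← prod_mul_distrib]
        apply prod_congr rfl; intro i _; congr 1; apply prod_congr rfl; intro j _
        split_ifs <;> ring

lemma one_le_prod_real {ι : Type*} {s : Finset ι} {f : ι → ℝ} (h : ∀ i, 1 ≤ f i) : 1 ≤ ∏ i ∈ s, f i := by
  calc (1:ℝ) = ∏ i ∈ s, 1 := by simp
    _ ≤ _ := prod_le_prod (fun _ _ => zero_le_one) (fun i _ => h i)

lemma exp_sum_le (hRH : RHz) {n : ℕ} (a : Fin n → ℝ) (ha : ∀ j, 0 < a j) : ∃ C : ℝ, 1 ≤ C ∧ ∀ (q : ℕ) (t : Fin n → ℝ) (δ : ℝ),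
    0 < Real.log q → 1 / Real.log q ≤ δ → δ ≤ 1 → (∀ i j, |t i - t j| < Real.exp q) →
    ∀ S : Finset ℕ, (∀ p ∈ S, p.Prime) → 
    Real.exp (∑ p ∈ S, ‖(1 / 2 : ℂ) * ∑ j, (a j : ℂ) * (p : ℂ) ^ (-(t j) * Complex.I)‖ ^ 2 * (p:ℝ) ^ (-(1 + δ))) ≤
    C * (Real.log q ^ ((∑ j, (a j) ^ 2) / 4) *
        ∏ i, ∏ j, if i < j then gfun q |t i - t j| ^ (a i * a j / 2) else 1) := by
  obtain ⟨C1, hC1, h1⟩ := zeta_gfun hRH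
  obtain ⟨C2, hC2, h2⟩ := exp_Pz_le
  have hC12 : 1 ≤ C2 * C1 := by nlinarith
  refine ⟨∏ i, ∏ j, (C2 * C1) ^ (a i * a j / 4), ?_, fun q t δ hq hδ hδ1 ht S hS => ?_⟩
  · apply one_le_prod_real; intro i; apply one_le_prod_real; intro j
    exact Real.one_le_rpow hC12 (by have := ha i; have := ha j; positivity)
  have hδ0 : 0 < δ := lt_of_lt_of_le (by positivity) hδ
  calc _ ≤ Real.exp (∑ i, ∑ j, (a i * a j / 4) * (Pz (1 + δ + (t i - t j : ℝ) * I)).re) :=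
        Real.exp_le_exp.2 (sum_hsq_le a t δ hδ0 S hS)
    _ = ∏ i, ∏ j, (Real.exp (Pz (1 + δ + (t i - t j : ℝ) * I)).re) ^ (a i * a j / 4) := by
        rw [Real.exp_sum]
        apply prod_congr rfl; intro i _
        rw [Real.exp_sum]
        apply prod_congr rfl; intro j _
        rw [← Real.exp_mul, mul_comm]
    _ ≤ ∏ i, ∏ j, ((C2 * C1) ^ (a i * a j / 4) * gfun q |t i - t j| ^ (a i * a j / 4)) := by
        apply prod_le_prod
        · intro i _; positivity
        intro i _
        apply prod_le_prod
        · intro j _; positivity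
        intro j _
        rw [← Real.mul_rpow (by positivity) (gfun_nonneg _ _ (abs_nonneg _))]
        have := ha i; have := ha j
        apply Real.rpow_le_rpow (by positivity) _ (by positivity)
        refine (h2 _ (by simp [hδ0])).trans ?_
        have := h1 q δ (t i - t j) hq hδ hδ1 (ht i j)
        rw [mul_assoc]
        gcongr
    _ = (∏ i, ∏ j, (C2 * C1) ^ (a i * a j / 4)) * ∏ i, ∏ j, gfun q |t i - t j| ^ (a i * a j / 4) := by
        simp_rw [prod_mul_distrib]
    _ = _ := by
        rw [prod_sym (fun i j => gfun q |t i - t j| ^ (a i * a j / 4))]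
        · congr 2
          · have : ∀ i, gfun q |t i - t i| = Real.log q := by
              intro i; unfold gfun; rw [if_pos]; left; simp; exact hq.le
            simp_rw [this]
            rw [← Real.rpow_sum_of_pos hq, sum_div]
            congr 1; apply sum_congr rfl; intro i _; ring
          · apply prod_congr rfl; intro i _; apply prod_congr rfl; intro j _
            split_ifs
            · rw [← Real.rpow_natCast, ← Real.rpow_mul (gfun_nonneg _ _ (abs_nonneg _))]
              congr 1; push_cast; ring
            · rfl
        · intro i j
          rw [abs_sub_comm, mul_comm]

/-- the random model character -/
noncomputable def Xc (S : Finset ℕ) (ω : S → ZMod 5) (m n : ℕ) : ℂ :=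
  ZMod.stdAddChar (∑ p : S, ((m.factorization p : ZMod 5) - (n.factorization p : ZMod 5)) * ω p)

lemma Xc_mul (S : Finset ℕ) (ω : S → ZMod 5) {m n m' n' : ℕ} (hm : m ≠ 0) (hn : n ≠ 0) (hm' : m' ≠ 0) (hn' : n' ≠ 0) :
    Xc S ω (m * m') (n * n') = Xc S ω m n * Xc S ω m' n' := by
  unfold Xc
  rw [← AddChar.map_add_eq_mul, ← sum_add_distrib]
  congr 1
  apply sum_congr rfl
  intro p _
  rw [Nat.factorization_mul hm hm', Nat.factorization_mul hn hn']
  push_cast [Finsupp.add_apply]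
  ring

lemma Xc_one (S : Finset ℕ) (ω : S → ZMod 5) : Xc S ω 1 1 = 1 := by
  simp [Xc]

lemma Xc_sum (S : Finset ℕ) (m n : ℕ) :
    (∑ ω : S → ZMod 5, Xc S ω m n = 0 ∨ ∑ ω : S → ZMod 5, Xc S ω m n = Fintype.card (S → ZMod 5)) ∧
    (m = n → ∑ ω : S → ZMod 5, Xc S ω m n = Fintype.card (S → ZMod 5)) := by
  classical
  constructor
  · let ψ : AddChar (S → ZMod 5) ℂ :=
      { toFun := fun ω => Xc S ω m n
        map_zero_eq_one' := by simp [Xc]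
        map_add_eq_mul' := by
          intro x y
          unfold Xc
          rw [← AddChar.map_add_eq_mul, ← sum_add_distrib]
          congr 1
          apply sum_congr rfl
          intro p _
          simp [mul_add] }
    have := AddChar.sum_eq_ite ψ
    have e : ∀ ω, ψ ω = Xc S ω m n := fun ω => rfl
    simp_rw [e] at this
    rw [this]
    split_ifs
    · right; rfl
    · left; rfl
  · rintro rfl
    simp [Xc]

inductive Dom (q : ℕ) (S : Finset ℕ) : ℝ → (DirichletCharacter ℂ q → ℂ) → ((S → ZMod 5) → ℂ) → Prop
  | mono (L : ℝ) (m n : ℕ) (w : ℂ) (w' : ℝ) (hm : m ≠ 0) (hn : n ≠ 0) (hw : ‖w‖ ≤ w')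
      (hL : w = 0 ∨ ((m:ℝ) ≤ L ∧ (n:ℝ) ≤ L)) :
      Dom q S L (fun χ => w * χ (m : ZMod q) * (starRingEnd ℂ) (χ (n : ZMod q))) (fun ω => (w' : ℂ) * Xc S ω m n)
  | add (L : ℝ) (f f' : DirichletCharacter ℂ q → ℂ) (g g' : (S → ZMod 5) → ℂ) (h : Dom q S L f g) (h' : Dom q S L f' g') :
      Dom q S L (fun χ => f χ + f' χ) (fun ω => g ω + g' ω)

variable {q : ℕ} {S : Finset ℕ} in
lemma Dom.le {L L' : ℝ} {f g} (h : Dom q S L f g) (hL : L ≤ L') : Dom q S L' f g := by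
  induction h with
  | mono m n w w' hm hn hw hL1 =>
    refine Dom.mono L' m n w w' hm hn hw ?_
    rcases hL1 with h | h
    · exact Or.inl h
    · exact Or.inr ⟨h.1.trans hL, h.2.trans hL⟩
  | add f f' g g' h h' ih ih' => exact Dom.add _ _ _ _ _ ih ih'

lemma Dom.zero_left {q : ℕ} {S : Finset ℕ} {L : ℝ} {f g} (L' : ℝ) (h : Dom q S L f g) : Dom q S L' (fun _ => 0) g := by
  induction h with
  | mono m n w w' hm hn hw hL1 =>
    have := Dom.mono (q := q) (S := S) L' m n 0 w' hm hn (by simpa using (norm_nonneg w).trans hw) (Or.inl rfl)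
    simpa using this
  | add f f' g g' h h' ih ih' => simpa using Dom.add _ _ _ _ _ ih ih'

lemma Dom.const {q : ℕ} {S : Finset ℕ} {L : ℝ} (hL : 1 ≤ L) {w : ℂ} {w' : ℝ} (hw : ‖w‖ ≤ w') :
    Dom q S L (fun _ => w) (fun _ => (w' : ℂ)) := by
  have := Dom.mono (q := q) (S := S) L 1 1 w w' one_ne_zero one_ne_zero hw (Or.inr (by simpa using hL))
  simpa [Xc_one] using this

lemma Dom.mul {q : ℕ} {S : Finset ℕ} {L L' : ℝ} {f g f' g'} (h : Dom q S L f g) (h' : Dom q S L' f' g') :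
    Dom q S (L * L') (fun χ => f χ * f' χ) (fun ω => g ω * g' ω) := by
  induction h with
  | mono m n w w' hm hn hw hL1 =>
    induction h' with
    | mono m' n' v v' hm' hn' hv hL1' =>
      have := Dom.mono (q := q) (S := S) (L * L') (m * m') (n * n') (w * v) (w' * v') (mul_ne_zero hm hm') (mul_ne_zero hn hn')
        (by rw [norm_mul]; exact mul_le_mul hw hv (norm_nonneg _) ((norm_nonneg _).trans hw)) ?_
      · convert! this using 1
        · funext χ; push_cast; rw [map_mul, map_mul, map_mul]; ring
        · funext ω; rw [Xc_mul S ω hm hn hm' hn']; push_cast; ring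
      · rcases hL1 with h | h
        · left; simp [h]
        rcases hL1' with h2 | h2
        · left; simp [h2]
        right
        push_cast
        exact ⟨mul_le_mul h.1 h2.1 (by positivity) ((Nat.cast_nonneg m).trans h.1),
          mul_le_mul h.2 h2.2 (by positivity) ((Nat.cast_nonneg n).trans h.2)⟩
    | add f f' g g' h h' ih ih' =>
      have := Dom.add _ _ _ _ _ ih ih'
      convert! this using 1
      · funext χ; ring
      · funext ω; ring
  | add f f' g g' h h' ih ih' =>
      have := Dom.add _ _ _ _ _ ih ih'
      convert! this using 1
      · funext χ; ring
      · funext ω; ring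

lemma Dom.pow {q : ℕ} {S : Finset ℕ} {L : ℝ} {f g} (h : Dom q S L f g) (j : ℕ) :
    Dom q S (L ^ j) (fun χ => f χ ^ j) (fun ω => g ω ^ j) := by
  induction j with
  | zero => simpa using Dom.const (q := q) (S := S) (L := 1) (w := 1) (w' := 1) le_rfl (by simp)
  | succ j ih => simp_rw [pow_succ]; exact ih.mul h

lemma Dom.sum {q : ℕ} {S : Finset ℕ} {L : ℝ} {ι : Type*} (s : Finset ι) {f : ι → DirichletCharacter ℂ q → ℂ} {g : ι → (S → ZMod 5) → ℂ}
    (h : ∀ i ∈ s, Dom q S L (f i) (g i)) :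
    Dom q S L (fun χ => ∑ i ∈ s, f i χ) (fun ω => ∑ i ∈ s, g i ω) := by
  classical
  induction s using Finset.induction_on with
  | empty =>
    have := Dom.mono (q := q) (S := S) L 1 1 0 0 one_ne_zero one_ne_zero (by simp) (Or.inl rfl)
    simpa using this
  | insert i s hi ih =>
    simp_rw [sum_insert hi]
    exact Dom.add _ _ _ _ _ (h i (mem_insert_self _ _)) (ih (fun j hj => h j (mem_insert_of_mem hj)))

lemma Dom.prod {q : ℕ} {S : Finset ℕ} {ι : Type*} (s : Finset ι) {L : ι → ℝ} {f : ι → DirichletCharacter ℂ q → ℂ} {g : ι → (S → ZMod 5) → ℂ}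
    (h : ∀ i ∈ s, Dom q S (L i) (f i) (g i)) :
    Dom q S (∏ i ∈ s, L i) (fun χ => ∏ i ∈ s, f i χ) (fun ω => ∏ i ∈ s, g i ω) := by
  classical
  induction s using Finset.induction_on with
  | empty => simpa using Dom.const (q := q) (S := S) (L := 1) (w := 1) (w' := 1) le_rfl (by simp)
  | insert i s hi ih =>
    simp_rw [prod_insert hi]
    exact (h i (mem_insert_self _ _)).mul (ih (fun j hj => h j (mem_insert_of_mem hj)))

lemma conj_char {q : ℕ} [NeZero q] (χ : DirichletCharacter ℂ q) (a : ZMod q) (ha : IsUnit a) :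
    (starRingEnd ℂ) (χ a) = χ a⁻¹ := by
  have h1 : χ a * χ a⁻¹ = 1 := by
    rw [← map_mul, ZMod.mul_inv_of_unit a ha, map_one]
  have h2 : ‖χ a‖ = 1 := by
    have := DirichletCharacter.unit_norm_eq_one χ ha.unit
    simpa using this
  have h3 : χ a ≠ 0 := by intro h; rw [h] at h2; simp at h2
  have h4 := Complex.mul_conj (χ a)
  rw [Complex.normSq_eq_norm_sq, h2] at h4
  apply mul_left_cancel₀ h3
  rw [h1, h4]; simp

lemma orth {q : ℕ} [NeZero q] (m n : ℕ) (hm : m < q) (hn : n < q) :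
    ‖∑ χ : DirichletCharacter ℂ q, χ (m : ZMod q) * (starRingEnd ℂ) (χ (n : ZMod q))‖ ≤ if m = n then (q.totient : ℝ) else 0 := by
  classical
  by_cases hu : IsUnit (n : ZMod q)
  · have e : ∀ χ : DirichletCharacter ℂ q, χ (m : ZMod q) * (starRingEnd ℂ) (χ (n : ZMod q)) = χ (n : ZMod q)⁻¹ * χ (m : ZMod q) := by
      intro χ; rw [conj_char χ _ hu, mul_comm]
    simp_rw [e]
    rw [DirichletCharacter.sum_char_inv_mul_char_eq ℂ hu]
    have : ((n : ZMod q) = (m : ZMod q)) ↔ m = n := by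
      rw [ZMod.natCast_eq_natCast_iff', Nat.mod_eq_of_lt hm, Nat.mod_eq_of_lt hn]; exact eq_comm
    simp only [this]
    split_ifs <;> simp
  · have e : ∀ χ : DirichletCharacter ℂ q, χ (m : ZMod q) * (starRingEnd ℂ) (χ (n : ZMod q)) = 0 := by
      intro χ; rw [χ.map_nonunit hu]; simp
    simp_rw [e]
    simp only [sum_const_zero, norm_zero]
    split_ifs <;> positivity

lemma Dom.final {q : ℕ} [NeZero q] {S : Finset ℕ} {L : ℝ} {f g} (h : Dom q S L f g) (hL : L < q) :
    ‖∑ χ, f χ‖ * Fintype.card (S → ZMod 5) ≤ q.totient * (∑ ω, g ω).re := by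
  induction h with
  | mono m n w w' hm hn hw hL1 =>
    simp_rw [mul_assoc, ← mul_sum]
    rw [norm_mul, re_ofReal_mul]
    have hw0 : 0 ≤ w' := (norm_nonneg _).trans hw
    obtain ⟨h1, h2⟩ := Xc_sum S m n
    have h3 : 0 ≤ (∑ ω, Xc S ω m n).re := by 
      rcases h1 with h | h
      · rw [h]; simp
      · rw [h, natCast_re]; positivity
    rcases hL1 with h | h
    · rw [h, norm_zero, zero_mul, zero_mul]; positivity
    have ho := orth (q := q) m n (by exact_mod_cast h.1.trans_lt hL) (by exact_mod_cast h.2.trans_lt hL)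
    split_ifs at ho with hmn
    · rw [h2 hmn]
      simp only [natCast_re]
      calc _ ≤ w' * (q.totient : ℝ) * (Fintype.card (S → ZMod 5) : ℝ) := by gcongr
        _ = _ := by ring
    · have : ‖∑ χ : DirichletCharacter ℂ q, χ (m : ZMod q) * (starRingEnd ℂ) (χ (n : ZMod q))‖ = 0 := le_antisymm ho (norm_nonneg _)
      rw [this, mul_zero, zero_mul]; positivity
  | add f f' g g' h h' ih ih' =>
    simp_rw [sum_add_distrib]
    rw [add_re, mul_add]
    have := norm_add_le (∑ χ, f χ) (∑ χ, f' χ)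
    have i1 := ih
    have i2 := ih'
    calc _ ≤ (‖∑ χ, f χ‖ + ‖∑ χ, f' χ‖) * Fintype.card (S → ZMod 5) := by gcongr
      _ ≤ _ := by rw [add_mul]; linarith

noncomputable def TE (J : ℕ) (x : ℂ) : ℂ := ∑ j ∈ range J, x ^ j / (j.factorial : ℂ)
noncomputable def TR (J : ℕ) (x : ℝ) : ℝ := ∑ j ∈ range J, x ^ j / (j.factorial : ℝ)

lemma TE_ofReal (J : ℕ) (x : ℝ) : TE J (x : ℂ) = (TR J x : ℂ) := by
  simp [TE, TR]

lemma Dom.texp {q : ℕ} {S : Finset ℕ} {L : ℝ} {f g} (hL : 1 ≤ L) (h : Dom q S L f g) {J J' : ℕ} (hJ : J ≤ J') :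
    Dom q S (L ^ J) (fun χ => TE J (f χ)) (fun ω => TE J' (g ω)) := by
  have e : ∀ x, TE J x = ∑ j ∈ range J', if j < J then x ^ j / (j.factorial : ℂ) else 0 := by
    intro x
    rw [← sum_filter, TE]
    apply sum_congr _ (fun _ _ => rfl)
    ext j; simp; omega
  simp_rw [e, TE]
  apply Dom.sum
  intro j _
  have hc := Dom.const (q := q) (S := S) (L := 1) (w := (j.factorial : ℂ)⁻¹) (w' := ((j.factorial : ℝ))⁻¹) le_rfl (by simp)
  have h1 := (h.pow j).mul hc
  have h2 : Dom q S (L ^ j * 1) (fun χ => f χ ^ j / (j.factorial : ℂ)) (fun ω => g ω ^ j / (j.factorial : ℂ)) := by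
    simpa [div_eq_mul_inv] using h1
  split_ifs with hj
  · exact h2.le (by rw [mul_one]; exact pow_le_pow_right₀ hL hj.le)
  · exact h2.zero_left _

lemma TE_tendsto (x : ℂ) : Filter.Tendsto (fun J => TE J x) Filter.atTop (nhds (cexp x)) := by
  have := NormedSpace.expSeries_div_hasSum_exp (𝔸 := ℂ) x
  rw [← Complex.exp_eq_exp_ℂ] at this
  exact this.tendsto_sum_nat

lemma chi_moment {q : ℕ} [NeZero q] {S : Finset ℕ} {ι : Type*} (I : Finset ι) (L : ι → ℝ) (J : ι → ℕ)
    (f : ι → DirichletCharacter ℂ q → ℂ) (g : ι → (S → ZMod 5) → ℂ) (hL : ∀ i ∈ I, 1 ≤ L i)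
    (h : ∀ i ∈ I, Dom q S (L i) (f i) (g i)) (hq : ∏ i ∈ I, (L i ^ J i) ^ 2 < q) :
    ‖∑ χ, ∏ i ∈ I, (TE (J i) (f i χ)) ^ 2‖ * Fintype.card (S → ZMod 5) ≤
      q.totient * (∑ ω, ∏ i ∈ I, (cexp (g i ω)) ^ 2).re := by
  have h1 : ∀ J' : ℕ, (∀ i ∈ I, J i ≤ J') → ‖∑ χ, ∏ i ∈ I, (TE (J i) (f i χ)) ^ 2‖ * Fintype.card (S → ZMod 5) ≤
      q.totient * (∑ ω, ∏ i ∈ I, (TE J' (g i ω)) ^ 2).re := by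
    intro J' hJ'
    apply Dom.final _ hq
    apply Dom.prod
    intro i hi
    exact ((h i hi).texp (hL i hi) (hJ' i hi)).pow 2
  have h2 : Filter.Tendsto (fun J' => (q.totient:ℝ) * (∑ ω, ∏ i ∈ I, (TE J' (g i ω)) ^ 2).re) Filter.atTop
      (nhds (q.totient * (∑ ω, ∏ i ∈ I, (cexp (g i ω)) ^ 2).re)) := by
    apply Filter.Tendsto.const_mul
    apply (Complex.continuous_re.tendsto _).comp
    apply tendsto_finsetSum; intro ω _
    apply tendsto_finsetProd; intro i _
    exact (TE_tendsto _).pow 2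
  apply ge_of_tendsto h2
  filter_upwards [Filter.eventually_ge_atTop (I.sup J)] with J' hJ'
  exact h1 J' (fun i hi => (Finset.le_sup hi).trans hJ')

lemma exp_tail (y : ℝ) (hy : 0 ≤ y) (J : ℕ) :
    Real.exp y - TR J y ≤ (20:ℝ)⁻¹ ^ J * Real.exp (20 * y) := by
  have h1 := NormedSpace.expSeries_div_hasSum_exp (𝔸 := ℝ) y
  have h2 := NormedSpace.expSeries_div_hasSum_exp (𝔸 := ℝ) (20 * y)
  rw [← Real.exp_eq_exp_ℝ] at h1 h2
  have h3 := (h2.mul_left ((20:ℝ)⁻¹ ^ J)).sub h1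
  have h4 := sum_le_hasSum (range J) (fun j hj => ?_) h3
  · rw [sum_sub_distrib] at h4
    have : 0 ≤ ∑ i ∈ range J, (20:ℝ)⁻¹ ^ J * ((20 * y) ^ i / (i.factorial : ℝ)) :=
      sum_nonneg (fun i _ => by positivity)
    unfold TR
    linarith
  · have hj : J ≤ j := by simpa using hj
    rw [sub_nonneg, mul_pow, ← mul_div_assoc, ← mul_assoc]
    gcongr
    have : (1:ℝ) ≤ (20:ℝ)⁻¹ ^ J * 20 ^ j := by
      rw [inv_pow, inv_mul_eq_div, le_div_iff₀ (by positivity), one_mul]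
      exact pow_le_pow_right₀ (by norm_num) hj
    have hyj : 0 ≤ y ^ j := by positivity
    nlinarith

lemma exp_le_TR (x : ℝ) (J : ℕ) (hJ : 1 ≤ J) (hx : |x| ≤ J / 20) :
    Real.exp x ≤ (1 + Real.exp (-J)) * TR J x := by
  have h1 : |Real.exp x - TR J x| ≤ Real.exp |x| - TR J |x| := by
    have := Complex.norm_exp_sub_sum_le_exp_norm_sub_sum (x : ℂ) J
    have e : cexp x - ∑ m ∈ range J, (x:ℂ) ^ m / m.factorial = ((Real.exp x - TR J x : ℝ) : ℂ) := by
      simp [TR]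
    rw [e, Complex.norm_real, Complex.norm_real] at this
    exact this
  have h2 := exp_tail |x| (abs_nonneg x) J
  have h3 : (20:ℝ)⁻¹ ^ J * Real.exp (20 * |x|) ≤ (Real.exp (-J) / 2) * Real.exp x := by
    have h4 : Real.exp (-(J / 20)) ≤ Real.exp x := Real.exp_le_exp.2 (by linarith [(abs_le.1 hx).1])
    have h5 : Real.exp (20 * |x|) ≤ Real.exp J := Real.exp_le_exp.2 (by linarith)
    have h6 : (20:ℝ)⁻¹ ^ J * Real.exp J ≤ Real.exp (-J) / 2 * Real.exp (-(J / 20)) := by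
      have e1 : Real.exp (J) = Real.exp (-J) * Real.exp (-(J/20)) * (Real.exp (41/20)) ^ J := by
        rw [← Real.exp_nat_mul, ← Real.exp_add, ← Real.exp_add]; congr 1; ring
      have h7 : Real.exp (41/20) ≤ 10 := by
        have a1 := Real.add_one_le_exp (-(1/20) : ℝ)
        have a2 : Real.exp (41/20) = Real.exp 1 * Real.exp 1 * Real.exp (1/20) := by
          rw [← Real.exp_add, ← Real.exp_add]; norm_num
        have a3 : Real.exp (1/20) * Real.exp (-(1/20)) = 1 := by rw [← Real.exp_add]; norm_num
        have a4 := Real.exp_one_lt_d9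
        have a5 := Real.exp_pos 1
        have a6 := Real.exp_pos (1/20 : ℝ)
        have a7 : Real.exp (1/20) ≤ 20/19 := by nlinarith
        rw [a2]
        have a8 : Real.exp 1 * Real.exp 1 ≤ 8 := by nlinarith
        nlinarith
      have h8 : (20:ℝ)⁻¹ ^ J * (Real.exp (41/20)) ^ J ≤ 1/2 := by
        rw [← mul_pow]
        calc _ ≤ ((20:ℝ)⁻¹ * 10) ^ J := by gcongr
          _ = (1/2) ^ J := by norm_num
          _ ≤ (1/2) ^ 1 := pow_le_pow_of_le_one (by norm_num) (by norm_num) hJ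
          _ = _ := by norm_num
      rw [e1]
      calc _ = Real.exp (-J) * Real.exp (-(J/20)) * ((20:ℝ)⁻¹ ^ J * (Real.exp (41/20)) ^ J) := by ring
        _ ≤ Real.exp (-J) * Real.exp (-(J/20)) * (1/2) := by gcongr
        _ = _ := by ring
    calc _ ≤ (20:ℝ)⁻¹ ^ J * Real.exp J := by gcongr
      _ ≤ _ := h6
      _ ≤ _ := by gcongr
  have h9 := (abs_le.1 (h1.trans (h2.trans h3))).2
  have hε : Real.exp (-J) ≤ 1 := by rw [Real.exp_le_one_iff]; simp
  have hε0 := Real.exp_pos (-J : ℝ)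
  have hx0 := Real.exp_pos x
  have h10 : (1 - Real.exp (-J) / 2) * Real.exp x ≤ TR J x := by linarith
  have h11 : 1 ≤ (1 + Real.exp (-J)) * (1 - Real.exp (-J) / 2) := by nlinarith
  calc Real.exp x = 1 * Real.exp x := by ring
    _ ≤ (1 + Real.exp (-J)) * (1 - Real.exp (-J) / 2) * Real.exp x := by gcongr
    _ = (1 + Real.exp (-J)) * ((1 - Real.exp (-J) / 2) * Real.exp x) := by ring
    _ ≤ _ := by gcongr

/-- one variable -/
noncomputable def ps (x : ZMod 5) : ℝ := (ZMod.stdAddChar x : ℂ).re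

lemma std_norm (x : ZMod 5) : ‖(ZMod.stdAddChar x : ℂ)‖ = 1 := by
  rw [ZMod.stdAddChar_apply]; exact Circle.norm_coe _

lemma std_conj (x : ZMod 5) : (starRingEnd ℂ) (ZMod.stdAddChar x : ℂ) = ZMod.stdAddChar (-x) := by
  rw [AddChar.map_neg_eq_inv, Complex.inv_def, Complex.normSq_eq_norm_sq, std_norm]; simp

lemma ps_eq (x : ZMod 5) : ((ps x : ℝ) : ℂ) = (ZMod.stdAddChar x + ZMod.stdAddChar (-x)) / 2 := by
  rw [← std_conj, ps, Complex.re_eq_add_conj]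

lemma ps_abs (x : ZMod 5) : |ps x| ≤ 1 := (Complex.abs_re_le_norm _).trans (std_norm x).le

lemma std_sum (b : ZMod 5) : ∑ x : ZMod 5, (ZMod.stdAddChar (x * b) : ℂ) = if b = 0 then 5 else 0 := by
  have := AddChar.sum_mulShift (ψ := (ZMod.stdAddChar : AddChar (ZMod 5) ℂ)) b (ZMod.isPrimitive_stdAddChar 5)
  rw [this]; simp [ZMod.card]

lemma ps_sum (b : ZMod 5) (hb : b ≠ 0) : ∑ x : ZMod 5, ps (x * b) = 0 := by
  have h := std_sum b
  rw [if_neg hb] at h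
  have := congrArg Complex.re h
  rw [re_sum] at this
  exact this

lemma ps_mul (x y : ZMod 5) : ps x * ps y = (ps (x + y) + ps (x - y)) / 2 := by
  have h : ((ps x * ps y : ℝ) : ℂ) = (((ps (x + y) + ps (x - y)) / 2 : ℝ) : ℂ) := by
    push_cast
    simp only [ps_eq, sub_eq_add_neg, neg_add, neg_neg, AddChar.map_add_eq_mul]
    ring
  exact_mod_cast h

lemma ps_zero : ps 0 = 1 := by simp [ps]

lemma one_var (u v : ℝ) (hu : 0 ≤ u) (hv : 0 ≤ v) :
    ∑ x : ZMod 5, Real.exp (2 * (u * ps x + v * ps (x * 2))) ≤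
      5 * Real.exp (u ^ 2 + v ^ 2 + (2 * (u + v)) ^ 3 * Real.exp (2 * (u + v))) := by
  set Y := 2 * (u + v) with hY
  have hY0 : 0 ≤ Y := by positivity
  have hb : ∀ x : ZMod 5, Real.exp (2 * (u * ps x + v * ps (x * 2))) ≤
      1 + 2 * (u * ps x + v * ps (x * 2)) + (2 * (u * ps x + v * ps (x * 2))) ^ 2 / 2 + Y ^ 3 * Real.exp Y := by
    intro x
    set y := 2 * (u * ps x + v * ps (x * 2)) with hy
    have hyY : |y| ≤ Y := by
      have h1 := ps_abs x
      have h2 := ps_abs (x * 2)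
      calc |y| = 2 * |u * ps x + v * ps (x * 2)| := by rw [hy, abs_mul]; norm_num
        _ ≤ 2 * (|u * ps x| + |v * ps (x * 2)|) := by gcongr; exact abs_add_le _ _
        _ = 2 * (u * |ps x| + v * |ps (x*2)|) := by rw [abs_mul, abs_mul, abs_of_nonneg hu, abs_of_nonneg hv]
        _ ≤ 2 * (u * 1 + v * 1) := by gcongr
        _ = Y := by rw [hY]; ring
    have h := Complex.norm_exp_sub_sum_le_norm_mul_exp (y : ℂ) 3
    have e : cexp y - ∑ m ∈ range 3, (y:ℂ) ^ m / m.factorial = ((Real.exp y - (1 + y + y ^ 2 / 2) : ℝ) : ℂ) := by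
      simp [sum_range_succ]
    rw [e, Complex.norm_real, Complex.norm_real, Real.norm_eq_abs, Real.norm_eq_abs] at h
    have h2 := (abs_le.1 h).2
    have h3 : |y| ^ 3 * Real.exp |y| ≤ Y ^ 3 * Real.exp Y := by gcongr
    linarith
  have e2 : ∀ x : ZMod 5, 1 + 2 * (u * ps x + v * ps (x * 2)) + (2 * (u * ps x + v * ps (x * 2))) ^ 2 / 2 + Y ^ 3 * Real.exp Y
     = (1 + Y ^ 3 * Real.exp Y + u ^ 2 + v ^ 2) + 2 * u * ps (x * 1) + 2 * v * ps (x * 2) + u ^ 2 * ps (x * 2) + v ^ 2 * ps (x * 4)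
        + 2 * u * v * ps (x * 3) + 2 * u * v * ps (x * 4) := by
    intro x
    have m1 := ps_mul x x
    have m2 := ps_mul (x * 2) (x * 2)
    have m3 := ps_mul x (x * 2)
    rw [sub_self, ps_zero, show x + x = x * 2 by ring] at m1
    rw [sub_self, ps_zero, show x * 2 + x * 2 = x * 4 by ring] at m2
    rw [show x + x * 2 = x * 3 by ring, show x - x * 2 = x * 4 by
      have : (4 : ZMod 5) = -1 := by decide
      rw [this]; ring] at m3
    rw [mul_one]
    linear_combination (2 * u ^ 2) * m1 + (2 * v ^ 2) * m2 + (4 * u * v) * m3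
  calc _ ≤ ∑ x : ZMod 5, (1 + 2 * (u * ps x + v * ps (x * 2)) + (2 * (u * ps x + v * ps (x * 2))) ^ 2 / 2 + Y ^ 3 * Real.exp Y) :=
        sum_le_sum (fun x _ => hb x)
    _ = 5 * (1 + Y ^ 3 * Real.exp Y + u ^ 2 + v ^ 2) := by
        simp_rw [e2, sum_add_distrib, ← mul_sum]
        rw [ps_sum 1 (by decide), ps_sum 2 (by decide), ps_sum 3 (by decide), ps_sum 4 (by decide)]
        simp [ZMod.card]; ring
    _ ≤ _ := by
        gcongr
        have := Real.add_one_le_exp (u ^ 2 + v ^ 2 + Y ^ 3 * Real.exp Y)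
        linarith

lemma model_prod (S : Finset ℕ) (u v : ℕ → ℝ) (hu : ∀ p, 0 ≤ u p) (hv : ∀ p, 0 ≤ v p) :
    ∑ ω : S → ZMod 5, Real.exp (2 * ∑ p : S, (u p * ps (ω p) + v p * ps (ω p * 2))) ≤
      Fintype.card (S → ZMod 5) *
        Real.exp (∑ p ∈ S, (u p ^ 2 + v p ^ 2 + (2 * (u p + v p)) ^ 3 * Real.exp (2 * (u p + v p)))) := by
  classical
  calc _ = ∑ ω : S → ZMod 5, ∏ p : S, Real.exp (2 * (u p * ps (ω p) + v p * ps (ω p * 2))) := by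
        simp_rw [mul_sum, Real.exp_sum]
    _ = ∏ p : S, ∑ x : ZMod 5, Real.exp (2 * (u p * ps x + v p * ps (x * 2))) := by
        rw [Finset.prod_univ_sum, Fintype.piFinset_univ]
    _ ≤ ∏ p : S, (5 * Real.exp (u p ^ 2 + v p ^ 2 + (2 * (u p + v p)) ^ 3 * Real.exp (2 * (u p + v p)))) := by
        apply prod_le_prod
        · intro p _; exact sum_nonneg (fun x _ => (Real.exp_pos _).le)
        · intro p _; exact one_var _ _ (hu p) (hv p)
    _ = _ := by
        rw [prod_mul_distrib, ← Real.exp_sum]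
        congr 1
        · simp [ZMod.card]
        · congr 1
          exact Finset.sum_coe_sort S (fun p => u p ^ 2 + v p ^ 2 + (2 * (u p + v p)) ^ 3 * Real.exp (2 * (u p + v p)))

lemma Xc_conj (S : Finset ℕ) (ω : S → ZMod 5) (m n : ℕ) : (starRingEnd ℂ) (Xc S ω m n) = Xc S ω n m := by
  unfold Xc
  rw [std_conj, ← sum_neg_distrib]
  congr 1; apply sum_congr rfl; intro p _; ring

lemma Xc_pow (S : Finset ℕ) (hS : ∀ p ∈ S, p.Prime) (ω : S → ZMod 5) (p : S) (k : ℕ) :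
    Xc S ω ((p:ℕ) ^ k) 1 = ZMod.stdAddChar (ω p * (k : ZMod 5)) := by
  unfold Xc
  congr 1
  rw [Finset.sum_eq_single p]
  · rw [(hS p p.2).factorization_pow]; simp [mul_comm]
  · intro p' _ hne
    rw [(hS p p.2).factorization_pow]
    have : (p:ℕ) ≠ p' := fun h => hne (Subtype.ext h.symm)
    simp [Finsupp.single_apply, this]
  · simp

lemma Dom.re {q : ℕ} {S : Finset ℕ} {L : ℝ} (hL : 1 ≤ L) (m : ℕ) (hm : m ≠ 0) (hmL : (m:ℝ) ≤ L) (c : ℂ) :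
    Dom q S L (fun χ => (((c * χ (m : ZMod q)).re : ℝ) : ℂ)) (fun ω => ((‖c‖ * (Xc S ω m 1).re : ℝ) : ℂ)) := by
  have h1 := Dom.mono (q := q) (S := S) L m 1 (c / 2) (‖c‖ / 2) hm one_ne_zero (by simp) (Or.inr ⟨hmL, by simpa using hL⟩)
  have h2 := Dom.mono (q := q) (S := S) L 1 m ((starRingEnd ℂ) c / 2) (‖c‖ / 2) one_ne_zero hm (by simp) (Or.inr ⟨by simpa using hL, hmL⟩)
  have := Dom.add _ _ _ _ _ h1 h2
  convert! this using 1
  · funext χ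
    rw [Complex.re_eq_add_conj, map_mul]; simp; ring
  · funext ω
    push_cast
    rw [Complex.re_eq_add_conj, Xc_conj]; ring

lemma key_moment {q : ℕ} [NeZero q] (I : Finset ℕ) (B : ℕ → Finset ℕ) (c d : ℕ → ℂ) (L : ℕ → ℝ) (J : ℕ → ℕ)
    (hprime : ∀ i ∈ I, ∀ p ∈ B i, p.Prime)
    (hdisj : (I : Set ℕ).PairwiseDisjoint B)
    (hL : ∀ i ∈ I, ∀ p ∈ B i, (p:ℝ) ^ 2 ≤ L i) (hL1 : ∀ i ∈ I, 1 ≤ L i) (hJ : ∀ i ∈ I, 1 ≤ J i)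
    (hq : ∏ i ∈ I, (L i ^ J i) ^ 2 < q)
    (F : ℕ → DirichletCharacter ℂ q → ℝ)
    (hF : ∀ i χ, F i χ = (∑ p ∈ B i, c p * χ (p : ZMod q)).re + (1 / 2) * (∑ p ∈ B i, d p * χ ((p : ZMod q) ^ 2)).re)
    (T : Finset (DirichletCharacter ℂ q)) (hT : ∀ χ ∈ T, ∀ i ∈ I, |F i χ| ≤ J i / 20) :
    ∑ χ ∈ T, Real.exp (2 * ∑ i ∈ I, F i χ) ≤
      (∏ i ∈ I, (1 + Real.exp (-J i))) ^ 2 * (q.totient *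
        Real.exp (∑ p ∈ I.biUnion B, (‖c p‖ ^ 2 + (‖d p‖ / 2) ^ 2 +
          (2 * (‖c p‖ + ‖d p‖ / 2)) ^ 3 * Real.exp (2 * (‖c p‖ + ‖d p‖ / 2))))) := by
  classical
  set S := I.biUnion B with hSdef
  have hS : ∀ p ∈ S, p.Prime := by
    intro p hp
    rw [hSdef, mem_biUnion] at hp
    obtain ⟨i, hi, hp⟩ := hp
    exact hprime i hi p hp
  let g : ℕ → (S → ZMod 5) → ℝ := fun i ω => ∑ p ∈ B i, (‖c p‖ * (Xc S ω p 1).re + ‖d p / 2‖ * (Xc S ω (p ^ 2) 1).re)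
  have hdom : ∀ i ∈ I, Dom q S (L i) (fun χ => ((F i χ : ℝ) : ℂ)) (fun ω => ((g i ω : ℝ) : ℂ)) := by
    intro i hi
    have h1 : Dom q S (L i) (fun χ => ∑ p ∈ B i, ((((c p * χ (p : ZMod q)).re : ℝ) : ℂ) + ((((d p / 2) * χ ((p ^ 2 : ℕ) : ZMod q)).re : ℝ) : ℂ)))
        (fun ω => ∑ p ∈ B i, (((‖c p‖ * (Xc S ω p 1).re : ℝ) : ℂ) + ((‖d p / 2‖ * (Xc S ω (p ^ 2) 1).re : ℝ) : ℂ))) := by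
      apply Dom.sum
      intro p hp
      have hpp := hprime i hi p hp
      have hp1 : (1:ℝ) ≤ p := by exact_mod_cast hpp.one_le
      have hpL := hL i hi p hp
      apply Dom.add
      · exact Dom.re (hL1 i hi) p hpp.ne_zero (by nlinarith) (c p)
      · exact Dom.re (hL1 i hi) (p ^ 2) (pow_ne_zero _ hpp.ne_zero) (by push_cast; exact hpL) (d p / 2)
    convert! h1 using 1
    · funext χ
      rw [hF, re_sum, re_sum, mul_sum, ← sum_add_distrib]
      push_cast
      apply sum_congr rfl; intro p _
      congr 1
      have : d p / 2 * χ ((p : ZMod q) ^ 2) = ((1/2 : ℝ) : ℂ) * (d p * χ ((p : ZMod q) ^ 2)) := by push_cast; ring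
      rw [this, re_ofReal_mul]; push_cast; ring
    · funext ω
      simp only [g]; push_cast; rfl
  have hmom := chi_moment I L J (fun i χ => ((F i χ : ℝ) : ℂ)) (fun i ω => ((g i ω : ℝ) : ℂ)) hL1 hdom hq
  have e1 : ∑ χ : DirichletCharacter ℂ q, ∏ i ∈ I, (TE (J i) ((F i χ : ℝ) : ℂ)) ^ 2 =
      ((∑ χ : DirichletCharacter ℂ q, ∏ i ∈ I, (TR (J i) (F i χ)) ^ 2 : ℝ) : ℂ) := by
    push_cast; simp_rw [TE_ofReal]
  have e2 : ∑ ω : S → ZMod 5, ∏ i ∈ I, (cexp ((g i ω : ℝ) : ℂ)) ^ 2 =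
      ((∑ ω : S → ZMod 5, Real.exp (2 * ∑ p : S, (‖c p‖ * ps (ω p) + (‖d p‖ / 2) * ps (ω p * 2))) : ℝ) : ℂ) := by
    rw [ofReal_sum]
    apply sum_congr rfl; intro ω _
    have : ∑ p : S, (‖c p‖ * ps (ω p) + (‖d p‖ / 2) * ps (ω p * 2)) = ∑ i ∈ I, g i ω := by
      simp only [g]
      rw [← sum_biUnion hdisj]
      rw [← Finset.sum_coe_sort S (fun p => (‖c p‖ * (Xc S ω p 1).re + ‖d p / 2‖ * (Xc S ω (p ^ 2) 1).re))]
      apply sum_congr rfl; intro p _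
      have x1 := Xc_pow S hS ω p 1
      have x2 := Xc_pow S hS ω p 2
      rw [pow_one] at x1
      rw [x1, x2]
      simp [ps]
    rw [this, ofReal_exp]
    push_cast
    rw [mul_comm, sum_mul, Complex.exp_sum]
    apply prod_congr rfl; intro i _
    rw [← Complex.exp_nat_mul]; congr 1; push_cast; ring
  rw [e1, e2, Complex.norm_real, ofReal_re] at hmom
  have hmod := model_prod S (fun p => ‖c p‖) (fun p => ‖d p‖ / 2) (fun p => norm_nonneg _) (fun p => by positivity)
  have hcard : (0:ℝ) < Fintype.card (S → ZMod 5) := by exact_mod_cast Fintype.card_pos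
  set E := Real.exp (∑ p ∈ S, (‖c p‖ ^ 2 + (‖d p‖ / 2) ^ 2 +
          (2 * (‖c p‖ + ‖d p‖ / 2)) ^ 3 * Real.exp (2 * (‖c p‖ + ‖d p‖ / 2)))) with hE
  have hm2 : ∑ χ : DirichletCharacter ℂ q, ∏ i ∈ I, (TR (J i) (F i χ)) ^ 2 ≤ q.totient * E := by
    have h1 : (∑ χ : DirichletCharacter ℂ q, ∏ i ∈ I, (TR (J i) (F i χ)) ^ 2) * Fintype.card (S → ZMod 5) ≤
        (q.totient * E) * Fintype.card (S → ZMod 5) := by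
      calc _ ≤ _ := mul_le_mul_of_nonneg_right (Real.le_norm_self _) hcard.le
        _ ≤ _ := hmom
        _ ≤ q.totient * (Fintype.card (S → ZMod 5) * E) := by
            apply mul_le_mul_of_nonneg_left _ (Nat.cast_nonneg _); exact hmod
        _ = _ := by ring
    exact le_of_mul_le_mul_right h1 hcard
  calc _ ≤ ∑ χ ∈ T, (∏ i ∈ I, (1 + Real.exp (-J i))) ^ 2 * ∏ i ∈ I, (TR (J i) (F i χ)) ^ 2 := by
        apply sum_le_sum; intro χ hχ
        rw [prod_pow, ← mul_pow, ← prod_mul_distrib, mul_comm, Real.exp_mul, Real.exp_sum]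
        rw [Real.rpow_ofNat]
        apply pow_le_pow_left₀
        · positivity
        · apply prod_le_prod
          · intro i _; positivity
          · intro i hi; exact exp_le_TR _ _ (hJ i hi) (hT χ hχ i hi)
    _ = (∏ i ∈ I, (1 + Real.exp (-J i))) ^ 2 * ∑ χ ∈ T, ∏ i ∈ I, (TR (J i) (F i χ)) ^ 2 := by rw [mul_sum]
    _ ≤ (∏ i ∈ I, (1 + Real.exp (-J i))) ^ 2 * ∑ χ : DirichletCharacter ℂ q, ∏ i ∈ I, (TR (J i) (F i χ)) ^ 2 := by
        apply mul_le_mul_of_nonneg_left _ (by positivity)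
        exact sum_le_sum_of_subset_of_nonneg (subset_univ T) (fun χ _ _ => prod_nonneg (fun i _ => by positivity))
    _ ≤ _ := by gcongr

lemma beta_zero (q : ℕ) : betaSeq q 0 = 0 := by simp [betaSeq]
lemma beta_one (q : ℕ) : betaSeq q 1 = 1 / (Real.log (Real.log q)) ^ 2 := by simp [betaSeq]
lemma beta_succ (q i : ℕ) (hi : 1 ≤ i) : betaSeq q (i + 1) = 20 * betaSeq q i := by
  obtain ⟨j, rfl⟩ : ∃ j, i = j + 1 := ⟨i - 1, by omega⟩
  simp [betaSeq, pow_succ]; ring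

lemma beta_pos (q i : ℕ) (hi : 1 ≤ i) (hq : 0 < Real.log (Real.log q)) : 0 < betaSeq q i := by
  unfold betaSeq
  rw [if_neg (by omega)]; positivity

lemma beta_nonneg (q i : ℕ) : 0 ≤ betaSeq q i := by
  unfold betaSeq
  split_ifs <;> positivity

lemma beta_mono (q : ℕ) : Monotone (betaSeq q) := by
  apply monotone_nat_of_le_succ
  intro n
  rcases Nat.eq_zero_or_pos n with rfl | hn
  · rw [beta_zero]; exact beta_nonneg _ _
  · rw [beta_succ q n hn]; linarith [beta_nonneg q n]

lemma bigI_facts (q : ℕ) (a A : ℝ) (hq : 0 < Real.log (Real.log q))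
    (h1 : 1 / (Real.log (Real.log q)) ^ 2 ≤ Real.exp (-(10000 * a ^ 2 * (A + 1)))) :
    2 ≤ bigI q a A ∧ Real.exp (-(10000 * a ^ 2 * (A + 1))) < betaSeq q (bigI q a A) ∧
      betaSeq q (bigI q a A) ≤ 20 * Real.exp (-(10000 * a ^ 2 * (A + 1))) := by
  set e := Real.exp (-(10000 * a ^ 2 * (A + 1))) with he
  set s := {i : ℕ | betaSeq q i ≤ e} with hs
  have hb1 : betaSeq q 1 ∈ Set.Iic e := by rw [beta_one]; exact h1
  have hb : BddAbove s := by
    obtain ⟨n, hn⟩ := pow_unbounded_of_one_lt (e * (Real.log (Real.log q)) ^ 2) (by norm_num : (1:ℝ) < 20)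
    refine ⟨n + 1, fun i hi => ?_⟩
    by_contra hlt
    push Not at hlt
    have h2 : betaSeq q (n + 1) ≤ e := (beta_mono q hlt.le).trans hi
    unfold betaSeq at h2
    rw [if_neg (by omega), div_le_iff₀ (by positivity)] at h2
    simp at h2
    linarith
  have hne : s.Nonempty := ⟨1, hb1⟩
  have hmem := Nat.sSup_mem hne hb
  have hge : 1 ≤ sSup s := le_csSup hb hb1
  have hN : bigI q a A = sSup s + 1 := by unfold bigI; rw [add_comm]
  rw [hN]
  refine ⟨by omega, ?_, ?_⟩
  · by_contra hle
    push Not at hle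
    have : sSup s + 1 ≤ sSup s := le_csSup hb hle
    omega
  · rw [beta_succ q _ hge]
    have : betaSeq q (sSup s) ≤ e := hmem
    linarith

lemma beta_sum (q N : ℕ) (hN : 1 ≤ N) (hq : 0 < Real.log (Real.log q)) :
    ∑ i ∈ Icc 1 N, betaSeq q i ^ (1/4 : ℝ) ≤ 2 * betaSeq q N ^ (1/4 : ℝ) := by
  induction N, hN using Nat.le_induction with
  | base => 
    have := Real.rpow_nonneg (beta_nonneg q 1) (1/4)
    simp only [Icc_self, sum_singleton]; linarith
  | succ n hn ih =>
    rw [sum_Icc_succ_top (by omega), beta_succ q n hn, Real.mul_rpow (by norm_num) (beta_nonneg q n)]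
    have h20 : (2:ℝ) ≤ 20 ^ (1/4 : ℝ) := by
      have : (2:ℝ) = 16 ^ (1/4 : ℝ) := by
        rw [show (16:ℝ) = 2 ^ (4:ℝ) by norm_num, ← Real.rpow_mul (by norm_num)]; norm_num
      rw [this]; apply Real.rpow_le_rpow <;> norm_num
    have := Real.rpow_nonneg (beta_nonneg q n) (1/4)
    nlinarith

lemma eps_facts (a A : ℝ) (ha : 10 ≤ a) (hA : 0 < A) :
    20 * Real.exp (-(10000 * a ^ 2 * (A + 1))) ≤ Real.exp (-(8000 * a ^ 2)) := by
  have h3 : (20:ℝ) ≤ Real.exp (2000 * a ^ 2) := by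
    have := Real.add_one_le_exp (2000 * a ^ 2)
    nlinarith
  calc _ ≤ Real.exp (2000 * a ^ 2) * Real.exp (-(10000 * a ^ 2)) := by
        apply mul_le_mul h3 _ (Real.exp_pos _).le (Real.exp_pos _).le
        apply Real.exp_le_exp.mpr
        nlinarith [sq_nonneg a, mul_nonneg (sq_nonneg a) hA.le]
    _ = _ := by rw [← Real.exp_add]; congr 1; ring

lemma eps_small (a x : ℝ) (ha : 10 ≤ a) (hx : 0 < x) (h : x ≤ Real.exp (-(8000 * a ^ 2))) :
    10 * a ≤ x ^ (-(3/4) : ℝ) ∧ 400 * x ^ (1/4 : ℝ) < 1 := by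
  constructor
  · have h1 : Real.exp (-(8000 * a ^ 2)) ^ (-(3/4) : ℝ) ≤ x ^ (-(3/4) : ℝ) :=
      Real.rpow_le_rpow_of_nonpos hx h (by norm_num)
    rw [← Real.exp_mul] at h1
    have := Real.add_one_le_exp (-(8000 * a ^ 2) * -(3 / 4))
    nlinarith
  · have h1 : x ^ (1/4 : ℝ) ≤ Real.exp (-(8000 * a ^ 2)) ^ (1/4 : ℝ) :=
      Real.rpow_le_rpow hx.le h (by norm_num)
    rw [← Real.exp_mul, show -(8000 * a ^ 2) * (1/4 : ℝ) = -(2000 * a ^ 2) by ring, Real.exp_neg] at h1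
    have := Real.add_one_le_exp (2000 * a ^ 2)
    have h2 : (Real.exp (2000 * a ^ 2))⁻¹ ≤ (200000:ℝ)⁻¹ := by
      apply inv_anti₀ (by norm_num); nlinarith
    linarith

-- blocks
noncomputable def Blk (q i : ℕ) : Finset ℕ :=
  Finset.filter (fun p : ℕ => p.Prime ∧ (q : ℝ) ^ betaSeq q (i - 1) < (p : ℝ))
      (Finset.Iic ⌊(q : ℝ) ^ betaSeq q i⌋₊)

lemma mem_Blk (q i p : ℕ) : p ∈ Blk q i ↔ p.Prime ∧ (q : ℝ) ^ betaSeq q (i - 1) < (p : ℝ) ∧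
    (p:ℝ) ≤ (q : ℝ) ^ betaSeq q i := by
  unfold Blk
  rw [mem_filter, mem_Iic, Nat.le_floor_iff (by positivity)]
  tauto

lemma Blk_disj (q N : ℕ) (hq : 1 ≤ q) : ((Icc 1 N : Finset ℕ) : Set ℕ).PairwiseDisjoint (Blk q) := by
  have key : ∀ i j, i < j → Disjoint (Blk q i) (Blk q j) := by
    intro i j hij
    rw [Finset.disjoint_left]
    intro p h1 h2
    rw [mem_Blk] at h1 h2
    have : (q:ℝ) ^ betaSeq q i ≤ (q:ℝ) ^ betaSeq q (j - 1) :=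
      Real.rpow_le_rpow_of_exponent_le (by exact_mod_cast hq) (beta_mono q (by omega))
    linarith [h1.2.2, h2.2.1]
  intro i _ j _ hne
  rcases lt_or_gt_of_ne hne with h | h
  · exact key i j h
  · exact (key j i h).symm

lemma Blk_union (q N : ℕ) (hq : 1 ≤ q) :
    (Icc 1 N).biUnion (Blk q) = Finset.filter Nat.Prime (Finset.Iic ⌊(q : ℝ) ^ betaSeq q N⌋₊) := by
  ext p
  rw [mem_biUnion, mem_filter, mem_Iic, Nat.le_floor_iff (by positivity)]
  constructor
  · rintro ⟨i, hi, hp⟩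
    rw [mem_Blk] at hp
    refine ⟨hp.2.2.trans ?_, hp.1⟩
    exact Real.rpow_le_rpow_of_exponent_le (by exact_mod_cast hq) (beta_mono q (mem_Icc.mp hi).2)
  · rintro ⟨h1, hp⟩
    classical
    have hex : ∃ i, (p:ℝ) ≤ (q : ℝ) ^ betaSeq q i := ⟨N, h1⟩
    have h0 : ¬ (p:ℝ) ≤ (q : ℝ) ^ betaSeq q 0 := by
      rw [beta_zero, Real.rpow_zero]; push Not; exact_mod_cast hp.one_lt
    have hf0 : Nat.find hex ≠ 0 := by
      intro h; apply h0; rw [← h]; exact Nat.find_spec hex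
    refine ⟨Nat.find hex, ?_, ?_⟩
    · rw [mem_Icc]; exact ⟨by omega, Nat.find_min' hex h1⟩
    · rw [mem_Blk]
      refine ⟨hp, ?_, Nat.find_spec hex⟩
      have := Nat.find_min hex (m := Nat.find hex - 1) (by omega)
      push Not at this; exact this

noncomputable def cco (q N : ℕ) (h : ℕ → ℂ) (p : ℕ) : ℂ :=
  h p / (p : ℂ) ^ (((1 / 2 + 1 / (betaSeq q N * Real.log q) : ℝ) : ℂ)) *
      ((Real.log ((q : ℝ) ^ betaSeq q N / p) / Real.log ((q : ℝ) ^ betaSeq q N) : ℝ) : ℂ)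

open Classical in
noncomputable def dco (q N : ℕ) (h : ℕ → ℂ) (p : ℕ) : ℂ :=
  if (p:ℝ) ≤ (q:ℝ) ^ (betaSeq q N / 2) then h (p ^ 2) / (p : ℂ) else 0

lemma h_norm {n : ℕ} (a t : Fin n → ℝ) (ha : ∀ j, 0 < a j) (m : ℕ) (hm : 0 < m) :
    ‖(1 / 2 : ℂ) * ∑ j, (a j : ℂ) * (m : ℂ) ^ (-(t j) * Complex.I)‖ ≤ (∑ j, a j) / 2 := by
  rw [norm_mul]
  have : ‖∑ j, (a j : ℂ) * (m : ℂ) ^ (-(t j) * Complex.I)‖ ≤ ∑ j, a j := by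
    apply (norm_sum_le _ _).trans
    apply sum_le_sum; intro j _
    rw [norm_mul, Complex.norm_real, Complex.norm_natCast_cpow_of_pos hm, Real.norm_of_nonneg (ha j).le]
    simp
  rw [show ‖(1/2:ℂ)‖ = 1/2 by simp]
  linarith

lemma cco_norm (q N : ℕ) (h : ℕ → ℂ) (p : ℕ) (hq : 0 < Real.log q) (hN : 0 < betaSeq q N) (hp : 1 ≤ p)
    (hpq : (p:ℝ) ≤ (q:ℝ) ^ betaSeq q N) :
    ‖cco q N h p‖ ≤ ‖h p‖ * (p:ℝ) ^ (-(1 / 2 + 1 / (betaSeq q N * Real.log q))) := by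
  have hp' : (0:ℝ) < p := by exact_mod_cast hp
  have hq0 : (0:ℝ) < q := by
    rcases Nat.eq_zero_or_pos q with h | h
    · subst h; simp at hq
    · exact_mod_cast h
  have hl : Real.log ((q : ℝ) ^ betaSeq q N) = betaSeq q N * Real.log q := Real.log_rpow hq0 _
  have hlp : 0 < Real.log ((q : ℝ) ^ betaSeq q N) := by rw [hl]; positivity
  have hnum : 0 ≤ Real.log ((q : ℝ) ^ betaSeq q N / p) := Real.log_nonneg (by rw [le_div_iff₀ hp']; linarith)
  have hnum2 : Real.log ((q : ℝ) ^ betaSeq q N / p) ≤ Real.log ((q : ℝ) ^ betaSeq q N) := by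
    apply Real.log_le_log (by positivity)
    apply div_le_self (by positivity); exact_mod_cast hp
  unfold cco
  rw [norm_mul, norm_div, Complex.norm_real, Complex.norm_natCast_cpow_of_pos hp, Complex.ofReal_re,
    Real.norm_of_nonneg (div_nonneg hnum hlp.le), Real.rpow_neg hp'.le, ← div_eq_mul_inv]
  apply mul_le_of_le_one_right (by positivity)
  rw [div_le_one hlp]; exact hnum2

lemma dco_norm (q N : ℕ) (h : ℕ → ℂ) (p : ℕ) (hp : 1 ≤ p) (M : ℝ) (hM : ‖h (p^2)‖ ≤ M) :
    ‖dco q N h p‖ ≤ M * (1 / p) := by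
  have hM0 : 0 ≤ M := (norm_nonneg _).trans hM
  unfold dco
  split_ifs
  · rw [norm_div, Complex.norm_natCast, mul_one_div]; gcongr
  · simp; positivity

lemma term_bound (p : ℕ) (hp : 1 ≤ p) (c d H a0 δ : ℝ) (ha : 0 < a0) (hc0 : 0 ≤ c) (hd0 : 0 ≤ d) (hH0 : 0 ≤ H) (hH : H ≤ a0) (hδ : 0 < δ)
    (hc : c ≤ H * (p:ℝ) ^ (-(1/2 + δ / 2))) (hd : d ≤ a0 * (1 / p)) :
    c ^ 2 + (d / 2) ^ 2 + (2 * (c + d / 2)) ^ 3 * Real.exp (2 * (c + d / 2)) ≤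
      H ^ 2 * (p:ℝ) ^ (-(1 + δ)) + (a0 ^ 2 + (4 * a0) ^ 3 * Real.exp (4 * a0)) * (p:ℝ) ^ (-(3/2) : ℝ) := by
  have hp1 : (1:ℝ) ≤ p := by exact_mod_cast hp
  have hp' : (0:ℝ) < p := by linarith
  have e1 : c ^ 2 ≤ H ^ 2 * (p:ℝ) ^ (-(1 + δ)) := by
    calc c ^ 2 ≤ (H * (p:ℝ) ^ (-(1/2 + δ / 2))) ^ 2 := pow_le_pow_left₀ hc0 hc 2
      _ = _ := by rw [mul_pow, ← Real.rpow_natCast, ← Real.rpow_natCast, ← Real.rpow_mul hp'.le]; congr 2; push_cast; ring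
  set u := (p:ℝ) ^ (-(1/2) : ℝ) with hu
  have hu0 : 0 < u := by positivity
  have hu1 : u ≤ 1 := Real.rpow_le_one_of_one_le_of_nonpos hp1 (by norm_num)
  have hcu : c ≤ a0 * u := by
    apply hc.trans
    apply mul_le_mul hH _ (by positivity) ha.le
    apply Real.rpow_le_rpow_of_exponent_le hp1; linarith
  have hpu : (1:ℝ) / p = u ^ 2 := by
    rw [hu, ← Real.rpow_natCast, ← Real.rpow_mul hp'.le]; norm_num [Real.rpow_neg_one]
  have hu3 : (p:ℝ) ^ (-(3/2) : ℝ) = u ^ 3 := by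
    rw [hu, ← Real.rpow_natCast, ← Real.rpow_mul hp'.le]; norm_num
  rw [hpu] at hd
  have hdu : d ≤ a0 * u := hd.trans (by apply mul_le_mul_of_nonneg_left _ ha.le; nlinarith)
  have e2 : (d / 2) ^ 2 ≤ a0 ^ 2 * u ^ 3 := by
    calc (d/2) ^ 2 ≤ (a0 * u ^ 2) ^ 2 := pow_le_pow_left₀ (by positivity) (by linarith) 2
      _ = a0 ^ 2 * (u ^ 3 * u) := by ring
      _ ≤ a0 ^ 2 * (u ^ 3 * 1) := by gcongr
      _ = _ := by ring
  have hx : 2 * (c + d / 2) ≤ 4 * a0 * u := by linarith [mul_pos ha hu0]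
  have hx2 : 2 * (c + d / 2) ≤ 4 * a0 := hx.trans (by nlinarith)
  have e3 : (2 * (c + d / 2)) ^ 3 * Real.exp (2 * (c + d / 2)) ≤ (4 * a0 * u) ^ 3 * Real.exp (4 * a0) := by
    gcongr
  rw [hu3]
  nlinarith

lemma Blk_inv_sum (C5 : ℝ) (hC5 : ∀ x, Real.exp 1 ≤ x → ∀ S : Finset ℕ, (∀ p ∈ S, p.Prime ∧ (p:ℝ) ≤ x) → ∑ p ∈ S, 1/(p:ℝ) ≤ 3*Real.log (Real.log x) + C5)
    (q N i : ℕ) (a0 : ℝ) (ha0 : 10 ≤ a0) (hi : 1 ≤ i) (hiN : i ≤ N) (hq1 : Real.exp 1 ≤ q)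
    (hLL : 0 < Real.log (Real.log q))
    (hN : betaSeq q N ≤ Real.exp (-(8000 * a0 ^ 2)))
    (hq2 : (a0 / 4) * (3 * Real.log (Real.log q) + C5) ≤ Real.log (Real.log q) ^ (3/2 : ℝ)) :
    (a0 / 4) * ∑ p ∈ Blk q i, 1 / (p:ℝ) ≤ betaSeq q i ^ (-(3/4 : ℝ)) := by
  have hq0 : (1:ℝ) < q := lt_of_lt_of_le (by simp) hq1
  have hbi : betaSeq q i ≤ Real.exp (-(8000 * a0 ^ 2)) := (beta_mono q hiN).trans hN
  rcases Nat.lt_or_ge 1 i with h | h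
  · obtain ⟨j, rfl⟩ : ∃ j, i = j + 1 := ⟨i - 1, by omega⟩
    have hb := beta_pos q j (by omega) hLL
    have := block_sum_le (Blk q (j+1)) ((q:ℝ) ^ betaSeq q j) ((q:ℝ) ^ betaSeq q (j+1))
      (Real.one_lt_rpow hq0 hb)
      (by rw [beta_succ q j (by omega), ← Real.rpow_natCast, ← Real.rpow_mul (by linarith)]
          apply le_of_eq; congr 1; push_cast; ring)
      (fun p hp => by rw [mem_Blk] at hp; simpa using hp)
    have h2 := (eps_small a0 _ ha0 (beta_pos q (j+1) hi hLL) hbi).1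
    calc _ ≤ (a0 / 4) * 40 := by gcongr
      _ ≤ _ := by linarith
  · obtain rfl : i = 1 := by omega
    have := hC5 q hq1 (Blk q 1) (fun p hp => by
      rw [mem_Blk] at hp
      refine ⟨hp.1, hp.2.2.trans ?_⟩
      calc (q:ℝ) ^ betaSeq q 1 ≤ (q:ℝ) ^ (1:ℝ) := by
            apply Real.rpow_le_rpow_of_exponent_le hq0.le
            apply hbi.trans
            apply Real.exp_le_one_iff.mpr
            nlinarith
        _ = q := Real.rpow_one _)
    have e : betaSeq q 1 ^ (-(3/4 : ℝ)) = Real.log (Real.log q) ^ (3/2 : ℝ) := by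
      rw [beta_one, one_div, Real.inv_rpow (by positivity), ← Real.rpow_natCast, ← Real.rpow_mul hLL.le,
        ← Real.rpow_neg hLL.le]
      congr 1; norm_num
    rw [e]
    refine le_trans ?_ hq2
    gcongr

lemma Gfun_eq (q : ℕ) (h : ℕ → ℂ) (i l : ℕ) (χ : DirichletCharacter ℂ q) :
    Gfun q h i l χ = ∑ p ∈ Blk q i, cco q l h p * χ (p : ZMod q) := by
  unfold Gfun Blk cco
  apply sum_congr rfl; intro p _; ring

lemma second_eq (q N : ℕ) (hq : 1 ≤ q) (h : ℕ → ℂ) (χ : DirichletCharacter ℂ q) :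
    ∑ p ∈ Finset.filter Nat.Prime (Finset.Iic ⌊(q : ℝ) ^ (betaSeq q N / 2)⌋₊),
                χ ((p : ZMod q) ^ 2) * h (p ^ 2) / (p : ℂ) =
    ∑ p ∈ Finset.filter Nat.Prime (Finset.Iic ⌊(q : ℝ) ^ betaSeq q N⌋₊), dco q N h p * χ ((p : ZMod q) ^ 2) := by
  classical
  have hle : (q : ℝ) ^ (betaSeq q N / 2) ≤ (q : ℝ) ^ betaSeq q N :=
    Real.rpow_le_rpow_of_exponent_le (by exact_mod_cast hq) (by linarith [beta_nonneg q N])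
  have hsub : Finset.filter Nat.Prime (Finset.Iic ⌊(q : ℝ) ^ (betaSeq q N / 2)⌋₊) ⊆
      Finset.filter Nat.Prime (Finset.Iic ⌊(q : ℝ) ^ betaSeq q N⌋₊) := by
    intro p hp
    rw [mem_filter, mem_Iic] at hp ⊢
    exact ⟨hp.1.trans (Nat.floor_mono hle), hp.2⟩
  rw [← sum_subset hsub]
  · apply sum_congr rfl; intro p hp
    rw [mem_filter, mem_Iic, Nat.le_floor_iff (by positivity)] at hp
    unfold dco; rw [if_pos hp.1]; ring
  · intro p hp hnp
    rw [mem_filter, mem_Iic, Nat.le_floor_iff (by positivity)] at hnp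
    rw [mem_filter] at hp
    unfold dco
    rw [if_neg (fun hh => hnp ⟨hh, hp.2⟩), zero_mul]

lemma core (C5 : ℝ) (hC5 : ∀ x, Real.exp 1 ≤ x → ∀ S : Finset ℕ, (∀ p ∈ S, p.Prime ∧ (p:ℝ) ≤ x) → ∑ p ∈ S, 1/(p:ℝ) ≤ 3*Real.log (Real.log x) + C5)
    (q N : ℕ) [NeZero q] (a0 : ℝ) (ha0 : 10 ≤ a0) (hN1 : 1 ≤ N) (hq1 : Real.exp 1 ≤ q)
    (hLL : 0 < Real.log (Real.log q))
    (hN : betaSeq q N ≤ Real.exp (-(8000 * a0 ^ 2)))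
    (hq2 : (a0 / 4) * (3 * Real.log (Real.log q) + C5) ≤ Real.log (Real.log q) ^ (3/2 : ℝ))
    (h : ℕ → ℂ) (hh : ∀ m, 0 < m → ‖h m‖ ≤ a0 / 2)
    (T : Finset (DirichletCharacter ℂ q))
    (hT : ∀ χ ∈ T, ∀ i, 1 ≤ i → i ≤ N → |(Gfun q h i N χ).re| ≤ betaSeq q i ^ (-(3 / 4 : ℝ))) :
    ∑ χ ∈ T,
        Real.exp (2 *
          ((∑ p ∈ Finset.filter Nat.Prime (Finset.Iic ⌊(q : ℝ) ^ betaSeq q N⌋₊),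
              χ p * h p /
                (p : ℂ) ^ (((1 / 2 + 1 / (betaSeq q N * Real.log q) : ℝ) : ℂ)) *
                ((Real.log ((q : ℝ) ^ betaSeq q N / p) /
                    Real.log ((q : ℝ) ^ betaSeq q N) : ℝ) : ℂ)).re
           + (1 / 2) *
            (∑ p ∈ Finset.filter Nat.Prime (Finset.Iic ⌊(q : ℝ) ^ (betaSeq q N / 2)⌋₊),
                χ ((p : ZMod q) ^ 2) * h (p ^ 2) / (p : ℂ)).re))
    ≤ Real.exp 1 * (q.totient * (Real.exp (∑ p ∈ Finset.filter Nat.Prime (Finset.Iic ⌊(q : ℝ) ^ betaSeq q N⌋₊),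
          ‖h p‖ ^ 2 * (p:ℝ) ^ (-(1 + 2 / (betaSeq q N * Real.log q)))) *
        Real.exp ((a0 ^ 2 + (4 * a0) ^ 3 * Real.exp (4 * a0)) * ∑' p : Nat.Primes, ((p:ℕ):ℝ) ^ (-(3/2) : ℝ)))) := by
  have hqR : (1:ℝ) < q := lt_of_lt_of_le (by simp) hq1
  have hqN : 1 ≤ q := Nat.one_le_iff_ne_zero.mpr (NeZero.ne q)
  have hlq : 0 < Real.log q := Real.log_pos hqR
  have hbN := beta_pos q N hN1 hLL
  set I := Icc 1 N with hI
  have hbpos : ∀ i ∈ I, 0 < betaSeq q i := fun i hi => beta_pos q i (mem_Icc.mp hi).1 hLL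
  have hbsmall : ∀ i ∈ I, betaSeq q i ≤ Real.exp (-(8000 * a0 ^ 2)) := fun i hi => (beta_mono q (mem_Icc.mp hi).2).trans hN
  have hble1 : ∀ i ∈ I, betaSeq q i ≤ 1 := fun i hi => (hbsmall i hi).trans (Real.exp_le_one_iff.mpr (by nlinarith))
  let F : ℕ → DirichletCharacter ℂ q → ℝ := fun i χ =>
    (∑ p ∈ Blk q i, cco q N h p * χ (p : ZMod q)).re + (1 / 2) * (∑ p ∈ Blk q i, dco q N h p * χ ((p : ZMod q) ^ 2)).re
  let J : ℕ → ℕ := fun i => ⌈40 * betaSeq q i ^ (-(3/4 : ℝ))⌉₊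
  have hone : ∀ i ∈ I, 1 ≤ betaSeq q i ^ (-(3/4 : ℝ)) := fun i hi =>
    Real.one_le_rpow_of_pos_of_le_one_of_nonpos (hbpos i hi) (hble1 i hi) (by norm_num)
  have hJlow : ∀ i, 40 * betaSeq q i ^ (-(3/4 : ℝ)) ≤ J i := fun i => Nat.le_ceil _
  have hJup : ∀ i ∈ I, (J i : ℝ) ≤ 41 * betaSeq q i ^ (-(3/4 : ℝ)) := fun i hi => by
    have := (Nat.ceil_lt_add_one (a := 40 * betaSeq q i ^ (-(3/4 : ℝ))) (by linarith [hone i hi])).le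
    linarith [hone i hi]
  have hsum := beta_sum q N hN1 hLL
  have hsm := (eps_small a0 _ ha0 hbN hN).2
  have hkm := key_moment (q := q) I (Blk q) (cco q N h) (dco q N h) (fun i => (q:ℝ) ^ (2 * betaSeq q i)) J
    (fun i _ p hp => ((mem_Blk _ _ _).mp hp).1)
    (Blk_disj q N hqN)
    (fun i _ p hp => by
      have := ((mem_Blk _ _ _).mp hp).2.2
      calc (p:ℝ) ^ 2 ≤ ((q:ℝ) ^ betaSeq q i) ^ 2 := by gcongr
        _ = _ := by rw [← Real.rpow_natCast, ← Real.rpow_mul (by linarith)]; congr 1; push_cast; ring)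
    (fun i _ => Real.one_le_rpow hqR.le (by linarith [beta_nonneg q i]))
    (fun i hi => by
      have h1 := hJlow i; have h2 := hone i hi
      have : (1:ℝ) ≤ J i := by linarith
      exact_mod_cast this)
    (by
      have : ∀ i ∈ I, (((q:ℝ) ^ (2 * betaSeq q i)) ^ J i) ^ 2 ≤ (q:ℝ) ^ (164 * betaSeq q i ^ (1/4 : ℝ)) := by
        intro i hi
        rw [← Real.rpow_mul_natCast (Nat.cast_nonneg q), ← Real.rpow_mul_natCast (Nat.cast_nonneg q)]
        apply Real.rpow_le_rpow_of_exponent_le hqR.le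
        have hb := hbpos i hi
        have e : betaSeq q i ^ (1/4 : ℝ) = betaSeq q i * betaSeq q i ^ (-(3/4 : ℝ)) := by
          nth_rewrite 2 [← Real.rpow_one (betaSeq q i)]
          rw [← Real.rpow_add hb]; congr 1; norm_num
        rw [e]
        push_cast
        have := mul_le_mul_of_nonneg_left (hJup i hi) hb.le
        nlinarith
      calc _ ≤ ∏ i ∈ I, (q:ℝ) ^ (164 * betaSeq q i ^ (1/4 : ℝ)) := prod_le_prod (fun i _ => by positivity) this
        _ = (q:ℝ) ^ (∑ i ∈ I, 164 * betaSeq q i ^ (1/4 : ℝ)) := (Real.rpow_sum_of_pos (by linarith) _ _).symm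
        _ < (q:ℝ) ^ (1:ℝ) := by
            apply Real.rpow_lt_rpow_of_exponent_lt hqR
            rw [← mul_sum]; linarith
        _ = q := Real.rpow_one _)
    F (fun i χ => rfl) T
    (fun χ hχ i hi => by
      have h1 := hT χ hχ i (mem_Icc.mp hi).1 (mem_Icc.mp hi).2
      rw [Gfun_eq] at h1
      have h2 := Blk_inv_sum C5 hC5 q N i a0 ha0 (mem_Icc.mp hi).1 (mem_Icc.mp hi).2 hq1 hLL hN hq2
      have h3 : |(∑ p ∈ Blk q i, dco q N h p * χ ((p : ZMod q) ^ 2)).re| ≤ (a0 / 2) * ∑ p ∈ Blk q i, 1 / (p:ℝ) := by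
        apply (Complex.abs_re_le_norm _).trans
        apply (norm_sum_le _ _).trans
        rw [mul_sum]
        apply sum_le_sum; intro p hp
        rw [norm_mul]
        have hpp := ((mem_Blk _ _ _).mp hp).1
        have := dco_norm q N h p hpp.one_le (a0 / 2) (hh _ (pow_pos hpp.pos 2))
        calc _ ≤ ‖dco q N h p‖ * 1 := by gcongr; exact DirichletCharacter.norm_le_one χ _
          _ ≤ _ := by linarith
      have h4 : |F i χ| ≤ 2 * betaSeq q i ^ (-(3/4 : ℝ)) := by
        simp only [F]
        apply (abs_add_le _ _).trans
        rw [abs_mul, abs_of_pos (by norm_num : (0:ℝ) < 1/2)]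
        linarith
      linarith [hJlow i])
  have hprod : (∏ i ∈ I, (1 + Real.exp (-J i))) ^ 2 ≤ Real.exp 1 := by
    have h1 : ∏ i ∈ I, (1 + Real.exp (-J i)) ≤ Real.exp (∑ i ∈ I, betaSeq q i ^ (1/4 : ℝ)) := by
      rw [Real.exp_sum]
      apply prod_le_prod (fun i _ => by positivity)
      intro i hi
      have h2 := Real.add_one_le_exp (betaSeq q i ^ (1/4 : ℝ))
      have hb := hbpos i hi
      have h3 : Real.exp (-J i) ≤ betaSeq q i ^ (1/4 : ℝ) := by
        have h5 := hJlow i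
        have h6 := Real.add_one_le_exp (J i : ℝ)
        have h7 : 0 < betaSeq q i ^ (-(3/4 : ℝ)) := by positivity
        rw [Real.exp_neg]
        calc (Real.exp (J i))⁻¹ ≤ (betaSeq q i ^ (-(3/4 : ℝ)))⁻¹ := by
              apply inv_anti₀ h7; linarith
          _ = betaSeq q i ^ (3/4 : ℝ) := by rw [← Real.rpow_neg hb.le]; congr 1; norm_num
          _ ≤ _ := Real.rpow_le_rpow_of_exponent_ge hb (hble1 i hi) (by norm_num)
      linarith
    calc _ ≤ (Real.exp (∑ i ∈ I, betaSeq q i ^ (1/4 : ℝ))) ^ 2 := pow_le_pow_left₀ (by positivity) h1 2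
      _ = Real.exp (2 * ∑ i ∈ I, betaSeq q i ^ (1/4 : ℝ)) := by rw [← Real.exp_nat_mul]; norm_num
      _ ≤ _ := by apply Real.exp_le_exp.mpr; linarith
  rw [Blk_union q N hqN] at hkm
  set S := Finset.filter Nat.Prime (Finset.Iic ⌊(q : ℝ) ^ betaSeq q N⌋₊) with hS
  have hFsum : ∀ χ : DirichletCharacter ℂ q, ∑ i ∈ I, F i χ =
      (∑ p ∈ S, χ p * h p /
                (p : ℂ) ^ (((1 / 2 + 1 / (betaSeq q N * Real.log q) : ℝ) : ℂ)) *
                ((Real.log ((q : ℝ) ^ betaSeq q N / p) /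
                    Real.log ((q : ℝ) ^ betaSeq q N) : ℝ) : ℂ)).re
           + (1 / 2) *
            (∑ p ∈ Finset.filter Nat.Prime (Finset.Iic ⌊(q : ℝ) ^ (betaSeq q N / 2)⌋₊),
                χ ((p : ZMod q) ^ 2) * h (p ^ 2) / (p : ℂ)).re := by
    intro χ
    rw [second_eq q N hqN h χ, ← hS, hS, ← Blk_union q N hqN, sum_biUnion (Blk_disj q N hqN), sum_biUnion (Blk_disj q N hqN)]
    simp only [F]
    rw [sum_add_distrib, ← mul_sum, re_sum (Icc 1 N), re_sum (Icc 1 N)]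
    congr 1
    apply sum_congr rfl; intro i _
    congr 1
    apply sum_congr rfl; intro p _
    unfold cco; ring
  simp_rw [hFsum] at hkm
  refine hkm.trans ?_
  apply mul_le_mul hprod _ (by positivity) (by positivity)
  apply mul_le_mul_of_nonneg_left _ (by positivity)
  rw [← Real.exp_add]
  apply Real.exp_le_exp.mpr
  set K := a0 ^ 2 + (4 * a0) ^ 3 * Real.exp (4 * a0) with hK
  have hK0 : 0 ≤ K := by positivity
  have hSp : ∀ p ∈ S, p.Prime := fun p hp => (mem_filter.mp hp).2
  have hts := sum_primes_le_tsum S hSp (fun p => (p:ℝ) ^ (-(3/2) : ℝ)) (fun p => by positivity)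
    (Nat.Primes.summable_rpow.mpr (by norm_num))
  calc _ ≤ ∑ p ∈ S, (‖h p‖ ^ 2 * (p:ℝ) ^ (-(1 + 2 / (betaSeq q N * Real.log q))) + K * (p:ℝ) ^ (-(3/2) : ℝ)) := by
        apply sum_le_sum; intro p hp
        have hpp := hSp p hp
        have hpq : (p:ℝ) ≤ (q:ℝ) ^ betaSeq q N := by
          rw [hS, mem_filter, mem_Iic, Nat.le_floor_iff (by positivity)] at hp; exact hp.1
        apply term_bound p hpp.one_le _ _ _ a0 _ (by linarith) (norm_nonneg _) (norm_nonneg _) (norm_nonneg _)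
        · linarith [hh p hpp.pos]
        · positivity
        · convert! cco_norm q N h p hlq hbN hpp.one_le hpq using 4
          ring
        · have := dco_norm q N h p hpp.one_le (a0 / 2) (hh _ (pow_pos hpp.pos 2))
          apply this.trans
          gcongr; linarith
    _ = _ := sum_add_distrib
    _ ≤ _ := by
        rw [← mul_sum]
        gcongr

lemma ev_conditions (a0 A C5 e : ℝ) (he : 0 < e) (hA : 0 < A) : ∃ q0 : ℕ, ∀ q : ℕ, q0 ≤ q →
    Real.exp 1 ≤ q ∧ 0 < Real.log (Real.log q) ∧ 1 / (Real.log (Real.log q)) ^ 2 ≤ e ∧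
    (a0 / 4) * (3 * Real.log (Real.log q) + C5) ≤ Real.log (Real.log q) ^ (3/2 : ℝ) ∧
    2 / (e * Real.log q) ≤ 1 ∧ 2 * (q:ℝ) ^ A < Real.exp q := by
  have hq : Filter.Tendsto (fun q : ℕ => (q:ℝ)) Filter.atTop Filter.atTop := tendsto_natCast_atTop_atTop
  have hl := Real.tendsto_log_atTop.comp hq
  have hll := Real.tendsto_log_atTop.comp hl
  have h4 : ∀ᶠ x : ℝ in Filter.atTop, (a0 / 4) * (3 * x + C5) ≤ x ^ (3/2 : ℝ) := by
    filter_upwards [Filter.eventually_ge_atTop (max 1 ((|a0| / 4 * (3 + |C5|)) ^ 2))] with x hx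
    have x1 := (le_max_left _ _).trans hx
    have x2 := (le_max_right _ _).trans hx
    have x3 : |a0| / 4 * (3 + |C5|) ≤ Real.sqrt x := Real.le_sqrt_of_sq_le x2
    have x4 : x ^ (3/2 : ℝ) = x * Real.sqrt x := by
      rw [Real.sqrt_eq_rpow]
      nth_rewrite 2 [← Real.rpow_one x]
      rw [← Real.rpow_add (by linarith)]; congr 1; norm_num
    rw [x4]
    calc (a0 / 4) * (3 * x + C5) ≤ |(a0 / 4) * (3 * x + C5)| := le_abs_self _
      _ = |a0| / 4 * |3 * x + C5| := by rw [abs_mul, abs_div]; norm_num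
      _ ≤ |a0| / 4 * (x * (3 + |C5|)) := by
          apply mul_le_mul_of_nonneg_left _ (by positivity)
          apply (abs_add_le _ _).trans
          rw [abs_of_nonneg (by linarith)]
          nlinarith [abs_nonneg C5]
      _ = x * (|a0| / 4 * (3 + |C5|)) := by ring
      _ ≤ _ := mul_le_mul_of_nonneg_left x3 (by linarith)
  have h6 : ∀ᶠ x : ℝ in Filter.atTop, 2 * x ^ A < Real.exp x := by
    have ho := isLittleO_rpow_exp_atTop A
    filter_upwards [ho.bound (by norm_num : (0:ℝ) < 1/4), Filter.eventually_ge_atTop 0] with x hx hx0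
    rw [Real.norm_of_nonneg (Real.rpow_nonneg hx0 _), Real.norm_of_nonneg (Real.exp_pos _).le] at hx
    linarith [Real.exp_pos x]
  have e1 := hq.eventually_ge_atTop (Real.exp 1)
  have e2 := hll.eventually_gt_atTop 0
  have e3 := hll.eventually_ge_atTop (max 1 (1 / e))
  have e4 := hll.eventually h4
  have e5 := hl.eventually_ge_atTop (2 / e)
  have e6 := hq.eventually h6
  have hall := e1.and (e2.and (e3.and (e4.and (e5.and e6))))
  obtain ⟨q0, hq0⟩ := Filter.eventually_atTop.mp hall
  refine ⟨q0, fun q hqq => ?_⟩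
  obtain ⟨g1, g2, g3, g4, g5, g6⟩ := hq0 q hqq
  simp only [Function.comp] at g2 g3 g4 g5
  refine ⟨g1, g2, ?_, g4, ?_, g6⟩
  · have k1 := (le_max_left _ _).trans g3
    have k2 := (le_max_right _ _).trans g3
    rw [div_le_iff₀ (by positivity)]
    rw [div_le_iff₀ he] at k2
    nlinarith
  · have hlq : 0 < Real.log q := lt_of_lt_of_le (by positivity) g5
    rw [div_le_one (by positivity)]
    rw [div_le_iff₀ he] at g5
    linarith

lemma mem_filt {α : Type*} [Fintype α] (P : α → Prop) (inst : DecidablePred P) (x : α)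
    (h : x ∈ @Finset.filter α P inst Finset.univ) : P x := by
  rw [Finset.mem_filter] at h; exact h.2

open Classical in
theorem stmt12 (k : ℕ) (hk : 0 < k) (a : Fin (2 * k) → ℝ) (A : ℝ)
    (ha : ∀ j, 0 < a j) (hA : 0 < A) :
    ∃ C : ℝ, 0 < C ∧ ∃ q0 : ℕ, ∀ (q : ℕ) [NeZero q], q0 ≤ q →
      (∀ χ : DirichletCharacter ℂ q, dirichletRH χ) →
      ∀ t : Fin (2 * k) → ℝ, (∀ j, |t j| ≤ (q : ℝ) ^ A) →
      ∀ h : ℕ → ℂ,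
        (h = fun n : ℕ => (1 / 2) * ∑ j, (a j : ℂ) * (n : ℂ) ^ (-(t j) * Complex.I)) →
      ∀ NI : ℕ, NI = bigI q ((∑ j, a j) + 10) A →
      ∑ χ ∈ Finset.univ.filter (fun χ : DirichletCharacter ℂ q =>
            χ.IsPrimitive ∧ ∀ i, 1 ≤ i → i ≤ NI →
              |(Gfun q h i NI χ).re| ≤ betaSeq q i ^ (-(3 / 4 : ℝ))),
        Real.exp (2 *
          ((∑ p ∈ Finset.filter Nat.Prime (Finset.Iic ⌊(q : ℝ) ^ betaSeq q NI⌋₊),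
              χ p * h p /
                (p : ℂ) ^ (((1 / 2 + 1 / (betaSeq q NI * Real.log q) : ℝ) : ℂ)) *
                ((Real.log ((q : ℝ) ^ betaSeq q NI / p) /
                    Real.log ((q : ℝ) ^ betaSeq q NI) : ℝ) : ℂ)).re
           + (1 / 2) *
            (∑ p ∈ Finset.filter Nat.Prime (Finset.Iic ⌊(q : ℝ) ^ (betaSeq q NI / 2)⌋₊),
                χ ((p : ZMod q) ^ 2) * h (p ^ 2) / (p : ℂ)).re))
      ≤ C * (Nat.totient q) * Real.log q ^ ((∑ j, (a j) ^ 2) / 4) *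
        ∏ i, ∏ j, if i < j then gfun q |t i - t j| ^ (a i * a j / 2) else 1 := by
  by_cases hRH : RHz
  swap
  · refine ⟨1, one_pos, 0, ?_⟩
    intro q _ _ hq
    exact absurd (RHz_of_dirichlet q (hq 1)) hRH
  obtain ⟨C6, hC6, hexp⟩ := exp_sum_le hRH a ha
  obtain ⟨C5, -, hC5⟩ := sum_inv_primes_le
  set a0 := (∑ j, a j) + 10 with ha0def
  have hsa : 0 ≤ ∑ j, a j := sum_nonneg (fun j _ => (ha j).le)
  have ha0 : 10 ≤ a0 := by linarith
  set e := Real.exp (-(10000 * a0 ^ 2 * (A + 1))) with he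
  have he0 : 0 < e := Real.exp_pos _
  obtain ⟨q0, hq0⟩ := ev_conditions a0 A C5 e he0 hA
  set W := Real.exp ((a0 ^ 2 + (4 * a0) ^ 3 * Real.exp (4 * a0)) * ∑' p : Nat.Primes, ((p:ℕ):ℝ) ^ (-(3/2) : ℝ)) with hW
  refine ⟨Real.exp 1 * C6 * W, by positivity, q0, ?_⟩
  intro q _ hqq _ t ht h hh NI hNI
  obtain ⟨g1, g2, g3, g4, g5, g6⟩ := hq0 q hqq
  have hlq : 0 < Real.log q := Real.log_pos (lt_of_lt_of_le (by simp) g1)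
  obtain ⟨b1, b2, b3⟩ := bigI_facts q a0 A g2 g3
  rw [← hNI] at b1 b2 b3
  rw [← he] at b2 b3
  have hes := eps_facts a0 A ha0 hA
  have hbN : betaSeq q NI ≤ Real.exp (-(8000 * a0 ^ 2)) := b3.trans hes
  have hb1 : betaSeq q NI ≤ 1 := hbN.trans (Real.exp_le_one_iff.mpr (by nlinarith))
  have hb0 : 0 < betaSeq q NI := he0.trans b2
  have hd1 : 1 / Real.log q ≤ 2 / (betaSeq q NI * Real.log q) := by
    rw [div_le_div_iff₀ hlq (by positivity)]
    nlinarith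
  have hd2 : 2 / (betaSeq q NI * Real.log q) ≤ 1 := by
    refine le_trans ?_ g5
    gcongr
  have hfin := hexp q t (2 / (betaSeq q NI * Real.log q)) hlq hd1 hd2
    (fun i j => by
      have := abs_sub (t i) (t j)
      linarith [ht i, ht j])
    (Finset.filter Nat.Prime (Finset.Iic ⌊(q : ℝ) ^ betaSeq q NI⌋₊))
    (fun p hp => (mem_filter.mp hp).2)
  refine (core C5 hC5 q NI a0 ha0 (by omega) g1 g2 hbN g4 h
    (fun m hm => by
      rw [hh]
      have := h_norm a t ha m hm
      simp only at this ⊢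
      linarith) _ (fun χ hχ => (mem_filt _ _ _ hχ).2)).trans ?_
  rw [← hW]
  have hfin2 : Real.exp (∑ p ∈ Finset.filter Nat.Prime (Finset.Iic ⌊(q : ℝ) ^ betaSeq q NI⌋₊),
          ‖h p‖ ^ 2 * (p:ℝ) ^ (-(1 + 2 / (betaSeq q NI * Real.log q)))) ≤ C6 * (Real.log q ^ ((∑ j, (a j)^2)/4) * ∏ i, ∏ j, if i < j then gfun q |t i - t j| ^ (a i * a j/2) else 1) := by
    rw [hh]; exact hfin
  calc _ ≤ Real.exp 1 * (q.totient * ((C6 * (Real.log q ^ ((∑ j, (a j)^2)/4) * ∏ i, ∏ j, if i < j then gfun q |t i - t j| ^ (a i * a j/2) else 1)) * W)) := by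
        gcongr
    _ = _ := by ring
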